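/- arXiv:1202.0874 — 2 statements merged into one kernel-verified Lean document; each statement's English description precedes it below -/
import Mathlib

section
/- Let p, q, a, b, c be positive integers and let s be a complex number with Re(s) > 1. Then S_{λ₂}(p,q,a,b,c,s) = 2(−1)^p Σ_{j=0}^{⌊p/2⌋} φ(2j) Σ_{ω=0}^{p−2j} C(ω+a−1, ω) C(p+c−2j−ω−1, c−1) T(q+a+ω, s, p+b+c−2j−ω; 1, −1) + 2(−1)^{p+a} Σ_{j=0}^{⌊c/2⌋} φ(2j) Σ_{ω=0}^{c−2j} C(ω+a−1, ω) C(p+c−2j−ω−1, p−1) T(q, s+a+ω, p+b+c−2j−ω; −1, 1) + 2(−1)^p Σ_{j=0}^{⌊a/2⌋} φ(2j) Σ_{ω=0}^{p−1} C(ω+a−2j, ω) C(p+c−2−ω, c−1) T(q+a−2j+ω+1, s, p+b+c−1−ω; −1, −1) + 2(−1)^{p+a} Σ_{j=0}^{⌊a/2⌋} φ(2j) Σ_{ω=0}^{c−1} C(ω+a−2j, ω) C(p+c−2−ω, p−1) T(q, s+a−2j+ω+1, p+b+c−1−ω; −1, −1), where C(n,k) denotes the binomial coefficient. -/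
open Complex Finset

/-- `φ(s) = (2^{1-s} - 1) ζ(s)` (with the convention `φ(1) = -log 2`). -/
noncomputable def phi (s : ℂ) : ℂ :=
  if s = 1 then -(Real.log 2 : ℂ) else ((2 : ℂ) ^ ((1 : ℂ) - s) - 1) * riemannZeta s

/-- `T(p,s,q;x,y) = Σ_{l ≠ 0, m ≥ 1, l+m ≠ 0} x^l y^m / (l^p m^s (l+m)^q)`. -/
noncomputable def T (p : ℕ) (s : ℂ) (q : ℕ) (x y : ℂ) : ℂ :=
  ∑' lm : ℤ × ℕ,
    if lm.1 ≠ 0 ∧ lm.1 + ((lm.2 : ℤ) + 1) ≠ 0 then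
      x ^ lm.1 * y ^ (lm.2 + 1) /
        ((lm.1 : ℂ) ^ p * (((lm.2 + 1 : ℕ) : ℂ)) ^ s *
          (((lm.1 + (lm.2 : ℤ) + 1 : ℤ) : ℂ)) ^ q)
    else 0

/-- Generic triple zeta-sum of type `A₃` with a weight `w` on `(l,m,n)`. -/
noncomputable def Z3 (w : ℕ → ℕ → ℕ → ℂ) (s₁ s₂ s₃ s₄ s₅ s₆ : ℂ) : ℂ :=
  ∑' t : ℕ × ℕ × ℕ,
    w (t.1 + 1) (t.2.1 + 1) (t.2.2 + 1) /
      ((((t.1 + 1 : ℕ) : ℂ)) ^ s₁ * (((t.2.1 + 1 : ℕ) : ℂ)) ^ s₂ *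
        (((t.2.2 + 1 : ℕ) : ℂ)) ^ s₃ * (((t.1 + 1 + (t.2.1 + 1) : ℕ) : ℂ)) ^ s₄ *
        (((t.2.1 + 1 + (t.2.2 + 1) : ℕ) : ℂ)) ^ s₅ *
        (((t.1 + 1 + (t.2.1 + 1) + (t.2.2 + 1) : ℕ) : ℂ)) ^ s₆)

/-- `ζ₃(s₁,…,s₆,λ₂∨;SU(4))`, with numerator `(-1)^{l+n}`. -/
noncomputable def Zlam2 : ℂ → ℂ → ℂ → ℂ → ℂ → ℂ → ℂ :=
  Z3 (fun l _ n => (-1 : ℂ) ^ (l + n))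

/-- The twelve-term alternating combination `S` built from a six-variable zeta `Z`. -/
noncomputable def Scomb (Z : ℂ → ℂ → ℂ → ℂ → ℂ → ℂ → ℂ) (p q a b c : ℕ) (s : ℂ) : ℂ :=
  Z p q s a b c + (-1 : ℂ) ^ p * Z p a s q c b + (-1 : ℂ) ^ (p + a) * Z q a c p s b +
    (-1 : ℂ) ^ (p + a + c) * Z q s c b a p + (-1 : ℂ) ^ q * Z a q b p s c +
    (-1 : ℂ) ^ (q + b) * Z a s b c q p + (-1 : ℂ) ^ (q + a) * Z a p b q c s +
    (-1 : ℂ) ^ (q + a + b) * Z a c b s p q + (-1 : ℂ) ^ (q + a + b + c) * Z s c p a b q +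
    (-1 : ℂ) ^ (p + q + a) * Z q p c a b s + (-1 : ℂ) ^ (p + q + a + c) * Z q b c s p a +
    (-1 : ℂ) ^ (p + q + a + b + c) * Z s b p q c a

/-- The right-hand side `J₂` of the functional relation for `ζ₃(·,λ₂∨;SU(4))`. -/
noncomputable def J2 (p q a b c : ℕ) (s : ℂ) : ℂ :=
  2 * (-1 : ℂ) ^ p * ∑ j ∈ range (p / 2 + 1), phi (2 * j) *
      ∑ ω ∈ range (p - 2 * j + 1),
        (Nat.choose (ω + a - 1) ω : ℂ) * (Nat.choose (p + c - 2 * j - ω - 1) (c - 1) : ℂ) *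
          T (q + a + ω) s (p + b + c - 2 * j - ω) 1 (-1) +
  2 * (-1 : ℂ) ^ (p + a) * ∑ j ∈ range (c / 2 + 1), phi (2 * j) *
      ∑ ω ∈ range (c - 2 * j + 1),
        (Nat.choose (ω + a - 1) ω : ℂ) * (Nat.choose (p + c - 2 * j - ω - 1) (p - 1) : ℂ) *
          T q (s + a + ω) (p + b + c - 2 * j - ω) (-1) 1 +
  2 * (-1 : ℂ) ^ p * ∑ j ∈ range (a / 2 + 1), phi (2 * j) *
      ∑ ω ∈ range p,
        (Nat.choose (ω + a - 2 * j) ω : ℂ) * (Nat.choose (p + c - 2 - ω) (c - 1) : ℂ) *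
          T (q + a - 2 * j + ω + 1) s (p + b + c - 1 - ω) (-1) (-1) +
  2 * (-1 : ℂ) ^ (p + a) * ∑ j ∈ range (a / 2 + 1), phi (2 * j) *
      ∑ ω ∈ range c,
        (Nat.choose (ω + a - 2 * j) ω : ℂ) * (Nat.choose (p + c - 2 - ω) (p - 1) : ℂ) *
          T q (s + ((a - 2 * j : ℕ) : ℂ) + ω + 1) (p + b + c - 1 - ω) (-1) (-1)

/-!
Read `l`, `m`, `n` as the successive differences of four integer points `P 0, …, P 3`. The twelve
terms of `S` are then the sums over the twelve orderings of these points with `P 3 < P 2`, so that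
together they make up one sum over all `l, m ∈ ℤ` and `n ≥ 1` for which the summand is defined.

In that sum `l` runs over all integers, and `∑ (-1)^l / (l^p (l+m)^a (l+m+n)^c)` is evaluated at its
three poles `0`, `-m` and `-(m+n)`: a pole of order `e` contributes twice the `e`-th coefficient of
`∑ φ(2j) X^(2j)` times the Taylor series of the other factors. The identity reduces by partial
fractions to a single pole, summed symmetrically because a simple pole converges only conditionally.
At the outer poles the Taylor series is a product of two binomial series; at the middle pole its two
factors are first separated by partial fractions. Summing over `m` and `n` turns every resulting
monomial into a value of `T`.
-/

section PartialFractions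

open PowerSeries

theorem coeff_C_add_X_inv_pow {K : Type*} [Field K] (y : K) (c k : ℕ) :
    coeff k ((C y + X)⁻¹ ^ c) = (-1) ^ k * ((k + c - 1).choose k : K) * (y ^ (c + k))⁻¹ := by
  rcases eq_or_ne y 0 with rfl | hy
  · rcases c with - | c
    · rcases k with - | k <;> simp [coeff_one]
    · simp
  have hmul : (C y + X) * (C y + X)⁻¹ = 1 := PowerSeries.mul_inv_cancel _ (by simpa using hy)
  induction c generalizing k with
  | zero => rcases k with - | k <;> simp [coeff_one]
  | succ c ihc =>
    have hstep : C y * (C y + X)⁻¹ ^ (c + 1) + X * (C y + X)⁻¹ ^ (c + 1) = (C y + X)⁻¹ ^ c := by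
      linear_combination (C y + X)⁻¹ ^ c * hmul
    induction k with
    | zero => simp
    | succ k ihk =>
      have hpascal : (k + c + 1).choose (k + 1) = (k + c).choose k + (k + c).choose (k + 1) :=
        Nat.choose_succ_succ _ _
      have hcoeff := congrArg (coeff (k + 1)) hstep
      rw [map_add, coeff_C_mul, coeff_succ_X_mul, ihc, ihk] at hcoeff
      apply mul_left_cancel₀ hy
      rw [eq_sub_of_add_eq hcoeff, show k + 1 + (c + 1) - 1 = k + c + 1 by omega,
        show k + 1 + c - 1 = k + c by omega, show k + (c + 1) - 1 = k + c by omega, hpascal]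
      push_cast
      field

theorem C_add_X_inv_mul_C_add_X_inv {K : Type*} [Field K] {u v : K} (hu : u ≠ 0) (hv : v ≠ 0)
    (huv : u ≠ v) : (C u + X)⁻¹ * (C v + X)⁻¹ =
      C (v - u)⁻¹ * ((C u + X)⁻¹ - (C v + X)⁻¹) := by
  have hu' : (C u + X) * (C u + X)⁻¹ = 1 := PowerSeries.mul_inv_cancel _ (by simpa using hu)
  have hv' : (C v + X) * (C v + X)⁻¹ = 1 := PowerSeries.mul_inv_cancel _ (by simpa using hv)
  have hsub : C (v - u)⁻¹ * (C v - C u) = (1 : PowerSeries K) := by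
    rw [← map_sub, ← map_mul, inv_mul_cancel₀ (sub_ne_zero.mpr huv.symm), map_one]
  linear_combination C (v - u)⁻¹ * (C u + X)⁻¹ * hv' - C (v - u)⁻¹ * (C v + X)⁻¹ * hu' -
    (C u + X)⁻¹ * (C v + X)⁻¹ * hsub

variable {R : Type*} [CommRing R]

/-- The part of the partial fraction expansion of `A ^ p * B ^ c` that is polynomial in `A`, when
`A * B = Z * (A - B)`. For `A = 1 / x` and `B = 1 / (x + y)` this relation holds with `Z = 1 / y`,
and the polar part is the singular part at `x = 0`. -/
def polarPart (Z A : R) (c p : ℕ) : R :=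
  ∑ i ∈ range p, (-1) ^ i * ((c + i - 1).choose i : R) * Z ^ (c + i) * A ^ (p - i)

theorem polarPart_succ_succ (Z A : R) (c p : ℕ) :
    polarPart Z A (c + 1) (p + 1) = Z * (polarPart Z A c (p + 1) - polarPart Z A (c + 1) p) := by
  have hpascal (i : ℕ) : (c + (i + 1)).choose (i + 1) = (c + i).choose i + (c + i).choose (i + 1) :=
    Nat.choose_succ_succ _ _
  simp only [polarPart]
  rw [sum_range_succ', sum_range_succ' _ p, add_sub_right_comm, ← sum_sub_distrib, mul_add, mul_sum]
  congr 1
  · refine sum_congr rfl fun i _ => ?_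
    rw [show c + 1 + (i + 1) - 1 = c + (i + 1) by omega, show c + (i + 1) - 1 = c + i by omega,
      show c + 1 + i - 1 = c + i by omega, hpascal, Nat.add_sub_add_right]
    push_cast
    ring
  · simp only [Nat.choose_zero_right]
    ring

theorem pow_mul_pow_eq_polarPart_add {Z A B : R} (h : A * B = Z * (A - B)) {p c : ℕ}
    (hpc : p + c ≠ 0) : A ^ p * B ^ c = polarPart Z A c p + polarPart (-Z) B p c := by
  have polarPart_zero_left (Z A : R) (p : ℕ) : polarPart Z A 0 (p + 1) = A ^ (p + 1) := by
    simp [polarPart, sum_range_succ', Nat.choose_succ_self]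
  induction hn : p + c generalizing p c with
  | zero => exact absurd hn hpc
  | succ n ih =>
    rcases p with - | p
    · rcases c with - | c
      · exact absurd rfl hpc
      · rw [polarPart_zero_left]; simp [polarPart]
    rcases c with - | c
    · rw [polarPart_zero_left]; simp [polarPart]
    have hsplit : A ^ (p + 1) * B ^ (c + 1) = Z * (A ^ (p + 1) * B ^ c - A ^ p * B ^ (c + 1)) := by
      linear_combination A ^ p * B ^ c * h
    rw [hsplit, ih (by omega) (by omega), ih (by omega) (by omega), polarPart_succ_succ,
      polarPart_succ_succ]
    ring

end PartialFractions

section AlternatingZeta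

open PowerSeries

theorem phi_zero : phi 0 = -1 / 2 := by
  norm_num [phi, riemannZeta_zero]

theorem hasSum_phi {s : ℂ} (hs : 1 < s.re) :
    HasSum (fun n : ℕ => (-1) ^ n / (n : ℂ) ^ s) (phi s) := by
  have hs1 : s ≠ 1 := by rintro rfl; simp at hs
  have hzeta : HasSum (fun n : ℕ => 1 / (n : ℂ) ^ s) (riemannZeta s) := by
    rw [zeta_eq_tsum_one_div_nat_cpow hs]
    exact (summable_one_div_nat_cpow.mpr hs).hasSum
  have heven : HasSum (fun n : ℕ => 1 / ((2 * n : ℕ) : ℂ) ^ s) (1 / 2 ^ s * riemannZeta s) := by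
    refine (hzeta.mul_left (1 / 2 ^ s : ℂ)).congr_fun fun n => ?_
    rw [Nat.cast_mul, natCast_mul_natCast_cpow, Nat.cast_ofNat, one_div_mul_one_div]
  have hodd : HasSum (fun n : ℕ => 1 / ((2 * n + 1 : ℕ) : ℂ) ^ s)
      (riemannZeta s - 1 / 2 ^ s * riemannZeta s) := by
    have hsum : Summable fun n : ℕ => 1 / ((2 * n + 1 : ℕ) : ℂ) ^ s :=
      hzeta.summable.comp_injective (i := fun n => 2 * n + 1) fun m n h => by simpa using h
    have hsplit := (heven.even_add_odd (f := fun n : ℕ => 1 / (n : ℂ) ^ s) hsum.hasSum).unique hzeta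
    rw [← eq_sub_of_add_eq' hsplit]
    exact hsum.hasSum
  have hphi : phi s = 1 / 2 ^ s * riemannZeta s + -(riemannZeta s - 1 / 2 ^ s * riemannZeta s) := by
    rw [phi, if_neg hs1, cpow_sub _ _ two_ne_zero, cpow_one]
    ring
  rw [hphi]
  refine HasSum.even_add_odd (heven.congr_fun fun n => ?_) (hodd.neg.congr_fun fun n => ?_)
  · simp only [pow_mul, neg_one_sq, one_pow]
  · rw [pow_succ, pow_mul, neg_one_sq, one_pow, one_mul, neg_div]

/-- The generating series `Σ_j φ(2j) X^{2j}` of the even values of `φ`. -/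
noncomputable def phiSeries : PowerSeries ℂ :=
  PowerSeries.mk fun k => if Even k then phi k else 0

theorem coeff_phiSeries_mul (p : ℕ) (W : PowerSeries ℂ) :
    coeff p (phiSeries * W) = ∑ j ∈ range (p / 2 + 1), phi (2 * j) * coeff (p - 2 * j) W := by
  rw [coeff_mul, Nat.sum_antidiagonal_eq_sum_range_succ_mk]
  simp only [phiSeries, coeff_mk, ite_mul, zero_mul]
  rw [← sum_filter]
  symm
  refine sum_nbij' (fun j => 2 * j) (fun i => i / 2) ?_ ?_ ?_ ?_ ?_
  · intro j hj
    simp only [mem_range, mem_filter] at hj ⊢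
    exact ⟨by omega, even_two_mul j⟩
  · intro i hi
    simp only [mem_range, mem_filter] at hi ⊢
    omega
  · intro j _
    omega
  · intro i hi
    exact Nat.two_mul_div_two_of_even (mem_filter.mp hi).2
  · intro j _
    push_cast
    rfl

end AlternatingZeta

section SymmetricSums

open Filter Topology SummationFilter

variable {E : Type*} [AddCommGroup E]

theorem sum_Icc_sub_one (f : ℤ → E) (N : ℕ) :
    ∑ l ∈ Icc (-(N : ℤ)) N, f (l - 1) = ∑ l ∈ Icc (-(N : ℤ)) N, f l - f N + f (-N - 1) := by
  have hshift : ∑ l ∈ Icc (-(N : ℤ)) N, f (l - 1) = ∑ l ∈ Ico (-N - 1 : ℤ) N, f l := by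
    refine sum_equiv (Equiv.subRight 1) (fun l => ?_) fun _ _ => rfl
    simp only [mem_Icc, mem_Ico, Equiv.subRight_apply]
    omega
  rw [hshift, ← insert_Ico_add_one_left_eq_Ico (by omega : (-N - 1 : ℤ) < N), sum_insert (by simp),
    sub_add_cancel, sum_Icc_eq_sum_Ico_add f (by omega)]
  abel

variable [TopologicalSpace E]

theorem hasSum_symmetricIcc_of_odd [IsAddTorsionFree E] {f : ℤ → E} (hf : f.Odd) :
    HasSum f 0 (symmetricIcc ℤ) := by
  have hzero (N : ℕ) : ∑ l ∈ Icc (-(N : ℤ)) N, f l = 0 := by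
    rw [← self_eq_neg, ← sum_neg_distrib]
    exact sum_equiv (Equiv.neg ℤ) (by simp [neg_le, and_comm]) fun l _ => by simp [hf l]
  simp only [hasSum_symmetricIcc_iff, hzero, tendsto_const_nhds]

variable [IsTopologicalAddGroup E] {f : ℤ → E} {a : E}

theorem hasSum_symmetricIcc_sub_one (hf : Tendsto f cofinite (𝓝 0)) :
    HasSum (fun l => f (l - 1)) a (symmetricIcc ℤ) ↔ HasSum f a (symmetricIcc ℤ) := by
  have hpos : Tendsto (fun N : ℕ => f N) atTop (𝓝 0) := by
    rw [← Nat.cofinite_eq_atTop]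
    exact hf.comp Nat.cast_injective.tendsto_cofinite
  have hneg : Tendsto (fun N : ℕ => f (-N - 1)) atTop (𝓝 0) := by
    rw [← Nat.cofinite_eq_atTop]
    refine hf.comp (Function.Injective.tendsto_cofinite fun M N h => ?_)
    simpa using h
  simp only [hasSum_symmetricIcc_iff, sum_Icc_sub_one]
  constructor
  · intro h
    simpa [sub_add_eq_add_sub] using (h.add hpos).sub hneg
  · intro h
    simpa using (h.sub hpos).add hneg

theorem hasSum_symmetricIcc_sub (hf : Tendsto f cofinite (𝓝 0)) (x : ℤ) :
    HasSum (fun l => f (l - x)) a (symmetricIcc ℤ) ↔ HasSum f a (symmetricIcc ℤ) := by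
  have hstep (x : ℤ) : HasSum (fun l => f (l - (x + 1))) a (symmetricIcc ℤ) ↔
      HasSum (fun l => f (l - x)) a (symmetricIcc ℤ) := by
    have hone := hasSum_symmetricIcc_sub_one (a := a)
      (hf.comp (sub_left_injective (b := x)).tendsto_cofinite)
    simpa only [Function.comp_def, sub_sub, add_comm] using hone
  induction x using Int.induction_on with
  | zero => simp only [sub_zero]
  | succ i ih => exact (hstep i).trans ih
  | pred i ih => exact (hstep (-i - 1)).symm.trans (by rwa [sub_add_cancel])

theorem hasSum_symmetricIcc_neg_one_zpow_mul_pow_inv {k : ℕ} (hk : 0 < k) :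
    HasSum (fun l : ℤ => (-1) ^ l * ((l : ℂ) ^ k)⁻¹) (2 * PowerSeries.coeff k phiSeries)
      (symmetricIcc ℤ) := by
  rw [phiSeries, PowerSeries.coeff_mk]
  split_ifs with heven
  · have hnat : HasSum (fun n : ℕ => (-1) ^ (n : ℤ) * (((n : ℤ) : ℂ) ^ k)⁻¹) (phi k) := by
      have hk1 : 1 < (k : ℂ).re := by
        obtain ⟨r, rfl⟩ := heven
        norm_cast
        omega
      simpa [div_eq_mul_inv] using hasSum_phi hk1
    have hneg : HasSum (fun n : ℕ => (-1) ^ (-(n : ℤ)) * (((-(n : ℤ) : ℤ) : ℂ) ^ k)⁻¹) (phi k) := by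
      simpa only [Int.cast_neg, heven.neg_pow, zpow_neg, ← inv_zpow, inv_neg_one] using hnat
    have hint := HasSum.of_nat_of_neg (f := fun l : ℤ => (-1) ^ l * ((l : ℂ) ^ k)⁻¹) hnat hneg
    rw [Int.cast_zero, zero_pow hk.ne', inv_zero, mul_zero, sub_zero, ← two_mul] at hint
    exact hint.mono_left LeAtTop.le_atTop
  · rw [mul_zero]
    refine hasSum_symmetricIcc_of_odd fun l => ?_
    simp only [Int.cast_neg, (Nat.not_even_iff_odd.mp heven).neg_pow, zpow_neg, ← inv_zpow,
      inv_neg, inv_one, mul_neg]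

theorem tendsto_cofinite_neg_one_zpow_mul_pow_inv {k : ℕ} (hk : 0 < k) :
    Tendsto (fun l : ℤ => (-1) ^ l * ((l : ℂ) ^ k)⁻¹) cofinite (𝓝 0) := by
  have hinv : Tendsto (fun l : ℤ => (l : ℝ)⁻¹) cofinite (𝓝 0) := by
    refine tendsto_inv₀_cobounded.comp ?_
    rw [Metric.cobounded_eq_cocompact]
    exact Int.tendsto_coe_cofinite
  have hpow := hinv.pow k
  rw [zero_pow hk.ne', tendsto_zero_iff_norm_tendsto_zero] at hpow
  rw [tendsto_zero_iff_norm_tendsto_zero]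
  exact hpow.congr fun l => by simp [norm_zpow]

end SymmetricSums

section PoleSums

open Filter Topology SummationFilter PowerSeries

variable {ι : Type*} [Fintype ι] (x : ι → ℤ) (e : ι → ℕ)

/-- The alternating summand `(-1)^l / ∏ i, (l - x i)^(e i)`, with value `0` at the points `x i`. -/
noncomputable def poleTerm (l : ℤ) : ℂ :=
  if ∃ i, x i = l then 0 else (-1) ^ l * ∏ i, (((l : ℂ) - x i) ^ e i)⁻¹

variable {x} in
theorem poleTerm_of_forall_ne_zero {e : ι → ℕ} (he : ∀ i, e i ≠ 0) (l : ℤ) :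
    poleTerm x e l = (-1) ^ l * ∏ i, (((l : ℂ) - x i) ^ e i)⁻¹ := by
  unfold poleTerm
  split_ifs with hl
  · obtain ⟨i, hi⟩ := hl
    rw [prod_eq_zero (mem_univ i) (by simp [hi, he i]), mul_zero]
  · rfl

variable [DecidableEq ι]

/-- The product of `phiSeries` with the Taylor expansion at `x k` of the factors
`1 / (l - x i)^(e i)`, `i ≠ k`. -/
noncomputable def poleSeries (k : ι) : PowerSeries ℂ :=
  phiSeries * ∏ i ∈ univ.erase k, (C ((x k : ℂ) - x i) + X)⁻¹ ^ e i

/-- Half the contribution of the pole `x k` to the sum of `poleTerm x e`. -/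
noncomputable def poleResidue (k : ι) : ℂ :=
  (-1) ^ x k * coeff (e k) (poleSeries x e k)

variable {x}

theorem sub_mul_poleTerm_add_single (j : ι) (l : ℤ) :
    ((l : ℂ) - x j) * poleTerm x (e + Pi.single j 1) l = poleTerm x e l := by
  unfold poleTerm
  split_ifs with hl
  · rw [mul_zero]
  have hlj : (l : ℂ) - x j ≠ 0 := sub_ne_zero.mpr fun h => hl ⟨j, by exact_mod_cast h.symm⟩
  have hsingle : ∏ i, (((l : ℂ) - x i) ^ Pi.single (M := fun _ => ℕ) j 1 i)⁻¹ =
      ((l : ℂ) - x j)⁻¹ := by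
    rw [Fintype.prod_eq_single j fun i hi => by simp [hi]]
    simp
  simp only [Pi.add_apply, pow_add, mul_inv, prod_mul_distrib, hsingle]
  field

theorem poleResidue_eq_coeff_mul (hx : Function.Injective x) (j k : ι) :
    poleResidue x e k = (-1) ^ x k * coeff ((e + Pi.single j 1 : ι → ℕ) k)
      ((C ((x k : ℂ) - x j) + X) * poleSeries x (e + Pi.single j 1) k) := by
  unfold poleResidue poleSeries
  congr 1
  rcases eq_or_ne k j with rfl | hkj
  · have hprod : ∏ i ∈ univ.erase k, (C ((x k : ℂ) - x i) + X)⁻¹ ^ (e + Pi.single k 1 : ι → ℕ) i =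
        ∏ i ∈ univ.erase k, (C ((x k : ℂ) - x i) + X)⁻¹ ^ e i :=
      prod_congr rfl fun i hi => by simp [ne_of_mem_erase hi]
    rw [hprod, sub_self, map_zero, zero_add, Pi.add_apply, Pi.single_eq_same, coeff_succ_X_mul]
  · have hy : (x k : ℂ) - x j ≠ 0 := sub_ne_zero.mpr (by exact_mod_cast hx.ne hkj)
    have hmul : (C ((x k : ℂ) - x j) + X) * (C ((x k : ℂ) - x j) + X)⁻¹ = 1 :=
      PowerSeries.mul_inv_cancel _ (by simpa using hy)
    have hsingle : ∏ i ∈ univ.erase k, (C ((x k : ℂ) - x i) + X)⁻¹ ^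
        Pi.single (M := fun _ => ℕ) j 1 i = (C ((x k : ℂ) - x j) + X)⁻¹ := by
      rw [prod_eq_single_of_mem j (by simp [hkj.symm]) fun i _ hi => by simp [hi]]
      simp
    simp only [Pi.add_apply, pow_add, prod_mul_distrib, hsingle]
    rw [Pi.single_eq_of_ne hkj, add_zero]
    congr 1
    linear_combination (-phiSeries * ∏ i ∈ univ.erase k, (C ((x k : ℂ) - x i) + X)⁻¹ ^ e i) * hmul

theorem sub_mul_poleTerm (i j : ι) (l : ℤ) :
    ((x i : ℂ) - x j) * poleTerm x (e + Pi.single i 1 + Pi.single j 1) l =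
      poleTerm x (e + Pi.single i 1) l - poleTerm x (e + Pi.single j 1) l := by
  rw [← sub_mul_poleTerm_add_single (e + Pi.single i 1) j l,
    ← sub_mul_poleTerm_add_single (e + Pi.single j 1) i l, add_right_comm e]
  ring

theorem sub_mul_poleResidue (hx : Function.Injective x) (i j k : ι) :
    ((x i : ℂ) - x j) * poleResidue x (e + Pi.single i 1 + Pi.single j 1) k =
      poleResidue x (e + Pi.single i 1) k - poleResidue x (e + Pi.single j 1) k := by
  rw [poleResidue_eq_coeff_mul (e + Pi.single i 1) hx j k,
    poleResidue_eq_coeff_mul (e + Pi.single j 1) hx i k, add_right_comm e, ← mul_sub, ← map_sub,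
    poleResidue, mul_left_comm, ← coeff_C_mul]
  congr 2
  simp only [map_sub]
  ring

theorem poleTerm_single (hx : Function.Injective x) {p : ℕ} (hp : 0 < p) (i : ι) (l : ℤ) :
    poleTerm x (Pi.single i p) l = (-1) ^ l * (((l : ℂ) - x i) ^ p)⁻¹ -
      ∑ k ∈ univ.erase i, if l = x k then (-1) ^ x k * (((x k : ℂ) - x i) ^ p)⁻¹ else 0 := by
  have hprod : ∏ k, (((l : ℂ) - x k) ^ Pi.single (M := fun _ => ℕ) i p k)⁻¹ =
      (((l : ℂ) - x i) ^ p)⁻¹ := by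
    rw [Fintype.prod_eq_single i fun k hk => by simp [hk], Pi.single_eq_same]
  rw [poleTerm, hprod]
  split_ifs with hl
  · obtain ⟨k, rfl⟩ := hl
    simp only [hx.eq_iff, sum_ite_eq, mem_erase, mem_univ, and_true]
    split_ifs with hki
    · rw [sub_self]
    · rw [not_not] at hki
      simp [hki, hp.ne']
  · rw [sum_eq_zero fun k _ => if_neg fun h => hl ⟨k, h.symm⟩, sub_zero]

theorem poleResidue_single_same (i : ι) (p : ℕ) :
    poleResidue x (Pi.single i p) i = (-1) ^ x i * coeff p phiSeries := by
  rw [poleResidue, poleSeries, prod_eq_one fun k hk => by simp [ne_of_mem_erase hk], mul_one,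
    Pi.single_eq_same]

theorem poleResidue_single_of_ne {i k : ι} (hki : k ≠ i) (p : ℕ) :
    poleResidue x (Pi.single i p) k = -1 / 2 * ((-1) ^ x k * (((x k : ℂ) - x i) ^ p)⁻¹) := by
  have hprod : ∏ j ∈ univ.erase k, (C ((x k : ℂ) - x j) + X)⁻¹ ^
      Pi.single (M := fun _ => ℕ) i p j = (C ((x k : ℂ) - x i) + X)⁻¹ ^ p := by
    rw [prod_eq_single_of_mem i (by simp [hki.symm]) fun j _ hj => by simp [hj], Pi.single_eq_same]
  rw [poleResidue, poleSeries, hprod, Pi.single_eq_of_ne hki, coeff_phiSeries_mul]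
  simp only [Nat.zero_div, zero_add, range_one, sum_singleton, Nat.mul_zero, Nat.sub_zero,
    coeff_C_add_X_inv_pow]
  norm_num [phi_zero]
  ring

theorem hasSum_poleTerm_single (hx : Function.Injective x) {p : ℕ} (hp : 0 < p) (i : ι) :
    HasSum (poleTerm x (Pi.single i p)) (2 * ∑ k, poleResidue x (Pi.single i p) k)
      (symmetricIcc ℤ) := by
  have hmain : HasSum (fun l : ℤ => (-1) ^ l * (((l : ℂ) - x i) ^ p)⁻¹)
      ((-1) ^ x i * (2 * coeff p phiSeries)) (symmetricIcc ℤ) := by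
    have hshift := (hasSum_symmetricIcc_sub
      (tendsto_cofinite_neg_one_zpow_mul_pow_inv hp) (x i)).mpr
        (hasSum_symmetricIcc_neg_one_zpow_mul_pow_inv hp)
    refine (hshift.mul_left ((-1) ^ x i)).congr_fun fun l => ?_
    rw [← mul_assoc, ← zpow_add₀ (by norm_num), add_sub_cancel, Int.cast_sub]
  have hpoles : HasSum (fun l => ∑ k ∈ univ.erase i,
      if l = x k then (-1) ^ x k * (((x k : ℂ) - x i) ^ p)⁻¹ else 0)
      (∑ k ∈ univ.erase i, (-1) ^ x k * (((x k : ℂ) - x i) ^ p)⁻¹) (symmetricIcc ℤ) :=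
    (hasSum_sum fun k _ => hasSum_ite_eq (x k) _).mono_left LeAtTop.le_atTop
  have hvalue : 2 * ∑ k, poleResidue x (Pi.single i p) k = (-1) ^ x i * (2 * coeff p phiSeries) -
      ∑ k ∈ univ.erase i, (-1) ^ x k * (((x k : ℂ) - x i) ^ p)⁻¹ := by
    rw [← add_sum_erase _ _ (mem_univ i), poleResidue_single_same, mul_add, mul_sum, sub_eq_add_neg,
      ← sum_neg_distrib]
    refine congrArg₂ _ (by ring) (sum_congr rfl fun k hk => ?_)
    rw [poleResidue_single_of_ne (ne_of_mem_erase hk)]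
    ring
  rw [hvalue]
  exact (hmain.sub hpoles).congr_fun fun l => poleTerm_single hx hp i l

theorem hasSum_poleTerm_add_single_add_single (hx : Function.Injective x) {i j : ι} (hij : i ≠ j)
    (hi : HasSum (poleTerm x (e + Pi.single i 1)) (2 * ∑ k, poleResidue x (e + Pi.single i 1) k)
      (symmetricIcc ℤ))
    (hj : HasSum (poleTerm x (e + Pi.single j 1)) (2 * ∑ k, poleResidue x (e + Pi.single j 1) k)
      (symmetricIcc ℤ)) :
    HasSum (poleTerm x (e + Pi.single i 1 + Pi.single j 1))
      (2 * ∑ k, poleResidue x (e + Pi.single i 1 + Pi.single j 1) k) (symmetricIcc ℤ) := by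
  have hxij : (x i : ℂ) - x j ≠ 0 := sub_ne_zero.mpr (by exact_mod_cast hx.ne hij)
  have hdiff := (hi.sub hj).mul_left ((x i : ℂ) - x j)⁻¹
  rw [← mul_sub, ← sum_sub_distrib] at hdiff
  simp only [← sub_mul_poleTerm, ← sub_mul_poleResidue e hx, ← mul_sum,
    mul_left_comm (2 : ℂ), inv_mul_cancel_left₀ hxij] at hdiff
  exact hdiff

theorem hasSum_poleTerm (hx : Function.Injective x) (he : e ≠ 0) :
    HasSum (poleTerm x e) (2 * ∑ k, poleResidue x e k) (symmetricIcc ℤ) := by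
  induction hn : ∑ i, e i generalizing e with
  | zero => exact absurd (funext fun i => sum_eq_zero_iff.mp hn i (mem_univ i)) he
  | succ n ih =>
    obtain ⟨i, hei⟩ := Function.ne_iff.mp he
    by_cases hsingle : e = Pi.single i (e i)
    · rw [hsingle]
      exact hasSum_poleTerm_single hx (Nat.pos_of_ne_zero hei) i
    obtain ⟨j, hej⟩ := Function.ne_iff.mp hsingle
    have hij : i ≠ j := by rintro rfl; simp at hej
    rw [Pi.zero_apply] at hei
    rw [Pi.single_eq_of_ne hij.symm] at hej
    have hle : Pi.single i 1 + Pi.single j 1 ≤ e := by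
      intro k
      simp only [Pi.add_apply, Pi.single_apply]
      split_ifs <;> grind
    obtain ⟨d, rfl⟩ : ∃ d : ι → ℕ, e = d + Pi.single i 1 + Pi.single j 1 :=
      ⟨_, by rw [add_assoc, tsub_add_cancel_of_le hle]⟩
    have hsum : ∑ k, d k + 1 = n := by simpa [sum_add_distrib] using hn
    have hne (k : ι) : d + Pi.single k 1 ≠ 0 := fun h => by simpa using congrFun h k
    have hsum_single (k : ι) : ∑ m, (d + Pi.single k 1 : ι → ℕ) m = n := by
      simpa [sum_add_distrib] using hsum
    exact hasSum_poleTerm_add_single_add_single d hx hij (ih _ (hne i) (hsum_single i))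
      (ih _ (hne j) (hsum_single j))

end PoleSums

section Summability

theorem norm_intCast_inv_le_one (x : ℤ) : ‖(x : ℂ)⁻¹‖ ≤ 1 := by
  rcases eq_or_ne x 0 with rfl | hx
  · simp
  · rw [norm_inv, norm_intCast]
    exact inv_le_one_of_one_le₀ (by exact_mod_cast Int.one_le_abs hx)

theorem norm_intCast_pow_inv_le {p : ℕ} (hp : 0 < p) (x : ℤ) :
    ‖((x : ℂ) ^ p)⁻¹‖ ≤ ‖(x : ℂ)⁻¹‖ := by
  rw [← inv_pow, norm_pow]
  exact pow_le_of_le_one (norm_nonneg _) (norm_intCast_inv_le_one x) hp.ne'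

theorem norm_pow_inv_mul_pow_inv_le {p q : ℕ} (hp : 0 < p) (hq : 0 < q) (x y : ℤ) :
    ‖((x : ℂ) ^ p)⁻¹ * ((y : ℂ) ^ q)⁻¹‖ ≤ ((x : ℝ) ^ 2)⁻¹ + ((y : ℝ) ^ 2)⁻¹ := by
  have hsq (z : ℤ) : ((z : ℝ) ^ 2)⁻¹ = ‖(z : ℂ)⁻¹‖ ^ 2 := by simp [norm_intCast]
  calc ‖((x : ℂ) ^ p)⁻¹ * ((y : ℂ) ^ q)⁻¹‖ ≤ ‖(x : ℂ)⁻¹‖ * ‖(y : ℂ)⁻¹‖ := by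
        rw [norm_mul]
        gcongr <;> exact norm_intCast_pow_inv_le ‹_› _
    _ ≤ ‖(x : ℂ)⁻¹‖ ^ 2 + ‖(y : ℂ)⁻¹‖ ^ 2 := by
        nlinarith [sq_nonneg (‖(x : ℂ)⁻¹‖ - ‖(y : ℂ)⁻¹‖), sq_nonneg (‖(x : ℂ)⁻¹‖ + ‖(y : ℂ)⁻¹‖)]
    _ = _ := by rw [hsq, hsq]

theorem summable_mul_pow_inv_mul_pow_inv {α : Type*} {w : α → ℂ} (hw : Summable w) (d : α → ℤ)
    {p q : ℕ} (hp : 0 < p) (hq : 0 < q) :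
    Summable fun t : α × ℤ =>
      w t.1 * (((t.2 : ℂ) ^ p)⁻¹ * (((t.2 + d t.1 : ℤ) : ℂ) ^ q)⁻¹) := by
  have hint : Summable fun x : ℤ => ((x : ℝ) ^ 2)⁻¹ := by
    simpa only [one_div] using Real.summable_one_div_int_pow.mpr one_lt_two
  have hmain : Summable fun t : α × ℤ => ‖w t.1‖ * ((t.2 : ℝ) ^ 2)⁻¹ :=
    hw.norm.mul_of_nonneg hint (fun _ => norm_nonneg _) fun _ => by positivity
  let shear : α × ℤ ≃ α × ℤ := Equiv.prodShear (Equiv.refl α) fun t => Equiv.addRight (d t)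
  refine Summable.of_norm_bounded (hmain.add (shear.summable_iff.mpr hmain)) fun t => ?_
  rw [norm_mul]
  exact (mul_le_mul_of_nonneg_left (norm_pow_inv_mul_pow_inv_le hp hq _ _) (norm_nonneg _)).trans_eq
    (mul_add _ _ _)

end Summability

section Tornheim

/-- The summand of `T`, without the conditions `l ≠ 0` and `l + m ≠ 0`: for positive exponents the
excluded terms vanish. -/
noncomputable def tornheimTerm (p : ℕ) (s : ℂ) (q : ℕ) (x y : ℂ) (t : ℤ × ℕ) : ℂ :=
  x ^ t.1 * y ^ (t.2 + 1) * (((t.1 : ℂ) ^ p)⁻¹ * (((t.2 + 1 : ℕ) : ℂ) ^ s)⁻¹ *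
    (((t.1 + (t.2 + 1 : ℕ) : ℤ) : ℂ) ^ q)⁻¹)

variable {p q : ℕ} {s x y : ℂ}

theorem summable_tornheimTerm (hp : 0 < p) (hq : 0 < q) (hs : 1 < s.re) (hx : ‖x‖ = 1)
    (hy : ‖y‖ = 1) : Summable (tornheimTerm p s q x y) := by
  have hnat : Summable fun n : ℕ => (((n + 1 : ℕ) : ℂ) ^ s)⁻¹ := by
    simpa only [one_div] using (summable_nat_add_iff 1).mpr (summable_one_div_nat_cpow.mpr hs)
  have hprod := (summable_mul_pow_inv_mul_pow_inv hnat (fun n => (n + 1 : ℕ)) hp hq).prod_symm.norm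
  refine Summable.of_norm (hprod.congr fun t => ?_)
  simp only [tornheimTerm, Prod.swap, norm_mul, norm_zpow, norm_pow, hx, hy, one_zpow, one_pow]
  ring

theorem hasSum_tornheimTerm (hp : 0 < p) (hq : 0 < q) (hs : 1 < s.re) (hx : ‖x‖ = 1)
    (hy : ‖y‖ = 1) : HasSum (tornheimTerm p s q x y) (T p s q x y) := by
  have hterm : T p s q x y = ∑' t, tornheimTerm p s q x y t := by
    refine tsum_congr fun t => ?_
    unfold tornheimTerm
    split_ifs with h
    · push_cast
      rw [div_eq_mul_inv, mul_inv, mul_inv, add_assoc]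
    · rw [not_and_or, not_not, not_not] at h
      rcases h with h | h
      · simp [h, hp.ne']
      · push_cast
        rw [show (t.1 : ℂ) + (t.2 + 1) = 0 by exact_mod_cast h]
        simp [hq.ne']
  rw [hterm]
  exact (summable_tornheimTerm hp hq hs hx hy).hasSum

theorem ne_zero_of_tornheimTerm_ne_zero (hp : 0 < p) (hq : 0 < q) {t : ℤ × ℕ}
    (ht : tornheimTerm p s q x y t ≠ 0) : t.1 ≠ 0 ∧ t.1 + (t.2 + 1 : ℕ) ≠ 0 := by
  refine ⟨fun h => ht ?_, fun h => ht ?_⟩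
  · simp [tornheimTerm, h, hp.ne']
  · rw [tornheimTerm, h]
    simp [hq.ne']

theorem hasSum_tornheimTerm_mul (hp : 0 < p) (hq : 0 < q) (hs : 1 < s.re) (hx : ‖x‖ = 1)
    (hy : ‖y‖ = 1) {u v : ℂ} (hu : ‖u‖ = 1) (hv : ‖v‖ = 1) (i j k : ℕ) :
    HasSum (fun t => tornheimTerm p s q x y t * (u ^ t.1 * v ^ (t.2 + 1) * (((t.1 : ℂ) ^ i)⁻¹ *
      (((t.2 + 1 : ℕ) : ℂ) ^ j)⁻¹ * (((t.1 + (t.2 + 1 : ℕ) : ℤ) : ℂ) ^ k)⁻¹)))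
      (T (p + i) (s + j) (q + k) (x * u) (y * v)) := by
  have hsj : 1 < (s + j).re := by
    rw [add_re, natCast_re]
    exact lt_add_of_lt_of_nonneg hs j.cast_nonneg
  refine (hasSum_tornheimTerm (Nat.add_pos_left hp i) (Nat.add_pos_left hq k) hsj
    (by rw [norm_mul, hx, hu, one_mul]) (by rw [norm_mul, hy, hv, one_mul])).congr_fun fun t => ?_
  simp only [tornheimTerm, pow_add, mul_zpow, mul_pow, mul_inv,
    cpow_add _ _ (Nat.cast_ne_zero.mpr t.2.succ_ne_zero), cpow_natCast]
  ring

end Tornheim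

section TripleSum

open SummationFilter

/-- The zeros in `l` of `l`, `l + m` and `l + m + n`, where `t = (m, n - 1)`. -/
def poles (t : ℤ × ℕ) : Fin 3 → ℤ :=
  ![0, -t.1, -(t.1 + (t.2 + 1 : ℕ))]

theorem poles_injective {t : ℤ × ℕ} (hm : t.1 ≠ 0) (hmn : t.1 + (t.2 + 1 : ℕ) ≠ 0) :
    Function.Injective (poles t) := by
  intro i j
  fin_cases i <;> fin_cases j <;> simp [poles] <;> grind

/-- The summand `(-1)^(l+n) / (l^p m^q n^s (l+m)^a (m+n)^b (l+m+n)^c)` at `t = ((m, n - 1), l)`,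
where `l` and `m` are arbitrary integers; it is `0` when a base vanishes. -/
noncomputable def tripleTerm (p q a b c : ℕ) (s : ℂ) (t : (ℤ × ℕ) × ℤ) : ℂ :=
  tornheimTerm q s b 1 (-1) t.1 * poleTerm (poles t.1) ![p, a, c] t.2

variable {p q a b c : ℕ} {s : ℂ}

theorem tripleTerm_eq (hp : 0 < p) (ha : 0 < a) (hc : 0 < c) (t : (ℤ × ℕ) × ℤ) :
    tripleTerm p q a b c s t = tornheimTerm q s b 1 (-1) t.1 *
      ((-1) ^ t.2 * (((t.2 : ℂ) ^ p)⁻¹ * (((t.2 + t.1.1 : ℤ) : ℂ) ^ a)⁻¹ *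
        (((t.2 + (t.1.1 + (t.1.2 + 1 : ℕ)) : ℤ) : ℂ) ^ c)⁻¹)) := by
  rw [tripleTerm,
    poleTerm_of_forall_ne_zero (by simp [Fin.forall_fin_succ, hp.ne', ha.ne', hc.ne'])]
  simp only [Fin.prod_univ_three, poles, Matrix.cons_val, Int.cast_zero, Int.cast_neg, sub_zero,
    sub_neg_eq_add, Int.cast_add]

theorem summable_tripleTerm (hp : 0 < p) (hq : 0 < q) (ha : 0 < a) (hb : 0 < b) (hc : 0 < c)
    (hs : 1 < s.re) : Summable (tripleTerm p q a b c s) := by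
  have hmain := (summable_mul_pow_inv_mul_pow_inv (summable_tornheimTerm hq hb hs norm_one
    (by simp : ‖(-1 : ℂ)‖ = 1)) (fun t => t.1 + (t.2 + 1 : ℕ)) hp hc).norm
  refine Summable.of_norm_bounded hmain fun t => ?_
  have hle : ‖(((t.2 + t.1.1 : ℤ) : ℂ) ^ a)⁻¹‖ ≤ 1 :=
    (norm_intCast_pow_inv_le ha _).trans (norm_intCast_inv_le_one _)
  rw [tripleTerm_eq hp ha hc, norm_mul, norm_mul, norm_mul, norm_mul, norm_mul, norm_zpow, norm_neg,
    norm_one, one_zpow, one_mul, norm_mul]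
  gcongr
  exact mul_le_of_le_one_right (norm_nonneg _) hle

theorem tsum_tripleTerm (hp : 0 < p) (hq : 0 < q) (ha : 0 < a) (hb : 0 < b) (hc : 0 < c)
    (hs : 1 < s.re) (t : ℤ × ℕ) :
    ∑' l, tripleTerm p q a b c s (t, l) =
      tornheimTerm q s b 1 (-1) t * (2 * ∑ k, poleResidue (poles t) ![p, a, c] k) := by
  rcases eq_or_ne (tornheimTerm q s b 1 (-1) t) 0 with h | h
  · simp [tripleTerm, h]
  obtain ⟨hm, hmn⟩ := ne_zero_of_tornheimTerm_ne_zero hq hb h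
  have hvalue := (hasSum_poleTerm ![p, a, c] (poles_injective hm hmn)
    fun h0 => hp.ne' (congrFun h0 0)).mul_left (tornheimTerm q s b 1 (-1) t)
  have hsum : HasSum _ _ (symmetricIcc ℤ) :=
    ((summable_tripleTerm hp hq ha hb hc hs).prod_factor t).hasSum.mono_left LeAtTop.le_atTop
  exact hsum.unique hvalue

end TripleSum

section Blocks

open PowerSeries

/-- The contribution to the functional relation of a pole of order `p` at an end of the three poles
in `l`, the other two having orders `a` and `c`, as a linear functional of the double sums
`τ k r` indexed by the exponents that the expansion produces. -/
noncomputable def outerBlock (p a c : ℕ) (τ : ℕ → ℕ → ℂ) : ℂ :=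
  ∑ j ∈ range (p / 2 + 1), phi (2 * j) * ∑ ω ∈ range (p - 2 * j + 1),
    ((ω + a - 1).choose ω : ℂ) * ((p + c - 2 * j - ω - 1).choose (c - 1) : ℂ) *
      τ (a + ω) (p + c - 2 * j - ω)

/-- The analogue of `outerBlock` for the middle pole, of order `a`: one of the two parts obtained by
splitting the other two factors, of orders `p` and `c`, into partial fractions. -/
noncomputable def middleBlock (p a c : ℕ) (τ : ℕ → ℕ → ℂ) : ℂ :=
  ∑ j ∈ range (a / 2 + 1), phi (2 * j) * ∑ ω ∈ range p,
    ((ω + a - 2 * j).choose ω : ℂ) * ((p + c - 2 - ω).choose (c - 1) : ℂ) *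
      τ (a - 2 * j + ω + 1) (p + c - 1 - ω)

variable {p a c : ℕ}

theorem hasSum_mul_outerBlock {α : Type*} {w : α → ℂ} {f : ℕ → ℕ → α → ℂ} {τ : ℕ → ℕ → ℂ}
    (h : ∀ k r, HasSum (fun t => w t * f k r t) (τ k r)) :
    HasSum (fun t => w t * outerBlock p a c fun k r => f k r t) (outerBlock p a c τ) := by
  unfold outerBlock
  simp only [mul_sum, mul_left_comm (w _)]
  exact hasSum_sum fun j _ => hasSum_sum fun ω _ => ((h _ _).mul_left _).mul_left _

theorem hasSum_mul_middleBlock {α : Type*} {w : α → ℂ} {f : ℕ → ℕ → α → ℂ} {τ : ℕ → ℕ → ℂ}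
    (h : ∀ k r, HasSum (fun t => w t * f k r t) (τ k r)) :
    HasSum (fun t => w t * middleBlock p a c fun k r => f k r t) (middleBlock p a c τ) := by
  unfold middleBlock
  simp only [mul_sum, mul_left_comm (w _)]
  exact hasSum_sum fun j _ => hasSum_sum fun ω _ => ((h _ _).mul_left _).mul_left _

theorem outerBlock_neg_pow_mul_neg_pow (u v : ℂ) :
    outerBlock p a c (fun k r => (-u) ^ k * (-v) ^ r) =
      (-1) ^ (p + a + c) * outerBlock p a c fun k r => u ^ k * v ^ r := by
  unfold outerBlock
  simp only [mul_sum]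
  refine sum_congr rfl fun j hj => sum_congr rfl fun ω hω => ?_
  rw [mem_range] at hj hω
  have hsign : p + a + c = 2 * j + (a + ω + (p + c - 2 * j - ω)) := by omega
  rw [hsign, pow_add _ (2 * j), pow_mul, neg_one_sq, one_pow, one_mul, neg_pow u, neg_pow v]
  ring

theorem middleBlock_neg_pow_mul_neg_pow (u v : ℂ) :
    middleBlock p a c (fun k r => (-u) ^ k * (-v) ^ r) =
      (-1) ^ (p + a + c) * middleBlock p a c fun k r => u ^ k * v ^ r := by
  unfold middleBlock
  simp only [mul_sum]
  refine sum_congr rfl fun j hj => sum_congr rfl fun ω hω => ?_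
  rw [mem_range] at hj hω
  have hsign : p + a + c = 2 * j + (a - 2 * j + ω + 1 + (p + c - 1 - ω)) := by omega
  rw [hsign, pow_add _ (2 * j), pow_mul, neg_one_sq, one_pow, one_mul, neg_pow u, neg_pow v]
  ring

theorem coeff_phiSeries_mul_inv_pow_mul_inv_pow (hc : 0 < c) (u v : ℂ) :
    coeff p (phiSeries * ((C u + X)⁻¹ ^ a * (C v + X)⁻¹ ^ c)) =
      (-1) ^ p * outerBlock p a c fun k r => (u ^ k)⁻¹ * (v ^ r)⁻¹ := by
  rw [coeff_phiSeries_mul, outerBlock, mul_sum]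
  refine sum_congr rfl fun j hj => ?_
  rw [mem_range] at hj
  rw [coeff_mul, Nat.sum_antidiagonal_eq_sum_range_succ_mk, mul_left_comm, mul_sum (a := (-1) ^ p)]
  refine congrArg (phi (2 * j) * ·) (sum_congr rfl fun ω hω => ?_)
  rw [mem_range] at hω
  obtain ⟨r, rfl⟩ : ∃ r, p = 2 * j + ω + r := ⟨p - 2 * j - ω, by omega⟩
  obtain ⟨d, rfl⟩ : ∃ d, c = d + 1 := ⟨c - 1, by omega⟩
  rw [show 2 * j + ω + r - 2 * j - ω = r by omega,
    show 2 * j + ω + r + (d + 1) - 2 * j - ω = d + 1 + r by omega, coeff_C_add_X_inv_pow,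
    coeff_C_add_X_inv_pow, show r + (d + 1) - 1 = r + d by omega,
    show d + 1 + r - 1 = r + d by omega, Nat.add_sub_cancel, Nat.choose_symm_add,
    pow_add _ (2 * j + ω), pow_add _ (2 * j), pow_mul, neg_one_sq, one_pow]
  ring

theorem coeff_polarPart (hc : 0 < c) (y z : ℂ) (n : ℕ) :
    coeff n (polarPart (C z) (C (-y) + X)⁻¹ c p) = (-1) ^ p * ∑ ω ∈ range p,
      ((ω + n).choose ω : ℂ) * ((p + c - 2 - ω).choose (c - 1) : ℂ) *
        ((y ^ (n + ω + 1))⁻¹ * z ^ (p + c - 1 - ω)) := by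
  rw [polarPart, ← sum_range_reflect, map_sum, mul_sum]
  refine sum_congr rfl fun ω hω => ?_
  rw [mem_range] at hω
  obtain ⟨r, rfl⟩ : ∃ r, p = ω + r + 1 := ⟨p - ω - 1, by omega⟩
  obtain ⟨d, rfl⟩ : ∃ d, c = d + 1 := ⟨c - 1, by omega⟩
  rw [show ω + r + 1 - 1 - ω = r by omega, show ω + r + 1 - r = ω + 1 by omega,
    show d + 1 + r - 1 = r + d by omega, show ω + r + 1 + (d + 1) - 2 - ω = r + d by omega,
    show ω + r + 1 + (d + 1) - 1 - ω = d + 1 + r by omega, Nat.add_sub_cancel]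
  have hconst : (-1) ^ r * ((r + d).choose r : PowerSeries ℂ) * C z ^ (d + 1 + r) =
      C ((-1) ^ r * ((r + d).choose r : ℂ) * z ^ (d + 1 + r)) := by
    simp only [map_mul, map_pow, map_neg, map_one, map_natCast]
  rw [hconst, coeff_C_mul, coeff_C_add_X_inv_pow, neg_pow y, Nat.choose_symm_add,
    show n + (ω + 1) - 1 = ω + n by omega, Nat.choose_symm_add, mul_inv, ← inv_pow (-1),
    inv_neg_one]
  have hsign : (-1 : ℂ) ^ n * (-1) ^ n = 1 := by rw [← mul_pow]; norm_num
  linear_combination ((-1) ^ (r + ω + 1) * ((r + d).choose d : ℂ) * z ^ (d + 1 + r) *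
    ((ω + n).choose n : ℂ) * (y ^ (n + ω + 1))⁻¹) * hsign

theorem coeff_phiSeries_mul_polarPart (hc : 0 < c) (y z : ℂ) :
    coeff a (phiSeries * polarPart (C z) (C (-y) + X)⁻¹ c p) =
      (-1) ^ p * middleBlock p a c fun k r => (y ^ k)⁻¹ * z ^ r := by
  rw [coeff_phiSeries_mul, middleBlock, mul_sum]
  refine sum_congr rfl fun j hj => ?_
  rw [mem_range] at hj
  simp only [coeff_polarPart hc, mul_left_comm (phi _), Nat.add_sub_assoc (show 2 * j ≤ a by omega)]

theorem J2_eq_blocks (q b : ℕ) (s : ℂ) :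
    J2 p q a b c s =
      2 * ((-1) ^ p * outerBlock p a c fun k r => T (q + k) s (b + r) 1 (-1)) +
      2 * ((-1) ^ (p + a) * outerBlock c a p fun k r => T q (s + k) (b + r) (-1) 1) +
      2 * ((-1) ^ p * middleBlock p a c fun k r => T (q + k) s (b + r) (-1) (-1)) +
      2 * ((-1) ^ (p + a) * middleBlock c a p fun k r => T q (s + k) (b + r) (-1) (-1)) := by
  simp only [J2, outerBlock, middleBlock, mul_sum, ← mul_assoc, add_comm c p]
  refine congrArg₂ _ (congrArg₂ _ (congrArg₂ _ ?_ ?_) ?_) ?_ <;>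
    refine sum_congr rfl fun j hj => sum_congr rfl fun ω hω => ?_ <;> rw [mem_range] at hj hω
  · rw [add_assoc q, show p + b + c - 2 * j - ω = b + (p + c - 2 * j - ω) by omega]
  · rw [add_assoc s, ← Nat.cast_add,
      show p + b + c - 2 * j - ω = b + (p + c - 2 * j - ω) by omega]
  · rw [show q + a - 2 * j + ω + 1 = q + (a - 2 * j + ω + 1) by omega,
      show p + b + c - 1 - ω = b + (p + c - 1 - ω) by omega]
  · rw [add_assoc s, ← Nat.cast_add, add_assoc s, ← Nat.cast_add_one,
      show p + b + c - 1 - ω = b + (p + c - 1 - ω) by omega]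

theorem poleResidue_poles_zero (hc : 0 < c) (t : ℤ × ℕ) :
    poleResidue (poles t) ![p, a, c] 0 = (-1) ^ p * outerBlock p a c fun k r =>
      ((t.1 : ℂ) ^ k)⁻¹ * (((t.1 + (t.2 + 1 : ℕ) : ℤ) : ℂ) ^ r)⁻¹ := by
  rw [← coeff_phiSeries_mul_inv_pow_mul_inv_pow hc, poleResidue, poleSeries,
    show univ.erase (0 : Fin 3) = {1, 2} by rfl, prod_pair (by decide)]
  simp [poles]

theorem poleResidue_poles_two (hp : 0 < p) (t : ℤ × ℕ) :
    poleResidue (poles t) ![p, a, c] 2 =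
      (-1) ^ t.1 * (-1) ^ (t.2 + 1) * ((-1) ^ (p + a) * outerBlock c a p fun k r =>
        (((t.2 + 1 : ℕ) : ℂ) ^ k)⁻¹ * (((t.1 + (t.2 + 1 : ℕ) : ℤ) : ℂ) ^ r)⁻¹) := by
  have hn : (poles t 2 : ℂ) - poles t 1 = -((t.2 + 1 : ℕ) : ℂ) := by simp [poles]
  have hmn : (poles t 2 : ℂ) - poles t 0 = -((t.1 + (t.2 + 1 : ℕ) : ℤ) : ℂ) := by simp [poles]
  have hsign : (-1 : ℂ) ^ poles t 2 = (-1) ^ t.1 * (-1) ^ (t.2 + 1) := by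
    rw [← zpow_natCast, ← zpow_add₀ (by norm_num)]
    simp only [poles, Matrix.cons_val, zpow_neg, ← inv_zpow, inv_neg_one]
  rw [poleResidue, poleSeries, show univ.erase (2 : Fin 3) = {1, 0} by decide,
    prod_pair (by decide), hn, hmn, hsign]
  simp only [Matrix.cons_val]
  rw [coeff_phiSeries_mul_inv_pow_mul_inv_pow hp]
  simp only [← inv_pow, inv_neg]
  rw [outerBlock_neg_pow_mul_neg_pow, ← mul_assoc ((-1) ^ c), ← pow_add,
    show c + (c + a + p) = 2 * c + (p + a) by ring, pow_add _ (2 * c), pow_mul, neg_one_sq, one_pow,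
    one_mul]

theorem poleResidue_poles_one (hp : 0 < p) (hc : 0 < c) {t : ℤ × ℕ}
    (hm : t.1 ≠ 0) (hmn : t.1 + (t.2 + 1 : ℕ) ≠ 0) :
    poleResidue (poles t) ![p, a, c] 1 =
      (-1) ^ t.1 * ((-1) ^ p * (middleBlock p a c fun k r =>
        ((t.1 : ℂ) ^ k)⁻¹ * (((t.1 + (t.2 + 1 : ℕ) : ℤ) : ℂ) ^ r)⁻¹) +
      (-1) ^ (p + a) * middleBlock c a p fun k r =>
        (((t.2 + 1 : ℕ) : ℂ) ^ k)⁻¹ * (((t.1 + (t.2 + 1 : ℕ) : ℤ) : ℂ) ^ r)⁻¹) := by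
  have hm0 : (poles t 1 : ℂ) - poles t 0 = -(t.1 : ℂ) := by simp [poles]
  have hn : (poles t 1 : ℂ) - poles t 2 = - -((t.2 + 1 : ℕ) : ℂ) := by simp [poles]
  have hsign : (-1 : ℂ) ^ poles t 1 = (-1) ^ t.1 := by
    simp only [poles, Matrix.cons_val, zpow_neg, ← inv_zpow, inv_neg_one]
  rw [poleResidue, poleSeries, show univ.erase (1 : Fin 3) = {0, 2} by decide,
    prod_pair (by decide), hm0, hn, hsign]
  simp only [Matrix.cons_val]
  have hrel : (C (-(t.1 : ℂ)) + X)⁻¹ * (C (- -((t.2 + 1 : ℕ) : ℂ)) + X)⁻¹ =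
      C (((t.1 + (t.2 + 1 : ℕ) : ℤ) : ℂ)⁻¹) *
        ((C (-(t.1 : ℂ)) + X)⁻¹ - (C (- -((t.2 + 1 : ℕ) : ℂ)) + X)⁻¹) := by
    have hN : ((t.1 + (t.2 + 1 : ℕ) : ℤ) : ℂ) = - -((t.2 + 1 : ℕ) : ℂ) - -(t.1 : ℂ) := by
      push_cast
      ring
    rw [hN]
    refine C_add_X_inv_mul_C_add_X_inv (by simpa using hm) ?_ ?_
    · rw [neg_neg]
      exact Nat.cast_ne_zero.mpr t.2.succ_ne_zero
    · rw [ne_comm, ← sub_ne_zero, ← hN]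
      exact_mod_cast hmn
  rw [pow_mul_pow_eq_polarPart_add hrel (by omega), mul_add, map_add, ← map_neg,
    coeff_phiSeries_mul_polarPart hc, coeff_phiSeries_mul_polarPart hp]
  simp only [← inv_pow, inv_neg]
  rw [middleBlock_neg_pow_mul_neg_pow, ← mul_assoc ((-1) ^ c), ← pow_add,
    show c + (c + a + p) = 2 * c + (p + a) by ring, pow_add _ (2 * c), pow_mul, neg_one_sq, one_pow,
    one_mul]

theorem hasSum_tornheimTerm_mul_sum_poleResidue (hp : 0 < p) {q : ℕ} (hq : 0 < q) {b : ℕ}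
    (hb : 0 < b) (hc : 0 < c) {s : ℂ} (hs : 1 < s.re) :
    HasSum (fun t => tornheimTerm q s b 1 (-1) t * (2 * ∑ k, poleResidue (poles t) ![p, a, c] k))
      (J2 p q a b c s) := by
  have hneg : ‖(-1 : ℂ)‖ = 1 := by simp
  let w := tornheimTerm q s b 1 (-1)
  have hmul {u v : ℂ} (hu : ‖u‖ = 1) (hv : ‖v‖ = 1) (i j k : ℕ) :=
    hasSum_tornheimTerm_mul hq hb hs norm_one hneg hu hv i j k
  have hzero := hasSum_mul_outerBlock (p := p) (a := a) (c := c) (w := w)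
    (f := fun k r t => ((t.1 : ℂ) ^ k)⁻¹ * (((t.1 + (t.2 + 1 : ℕ) : ℤ) : ℂ) ^ r)⁻¹)
    (τ := fun k r => T (q + k) s (b + r) 1 (-1))
    fun k r => by simpa using hmul norm_one norm_one k 0 r
  have htwo := hasSum_mul_outerBlock (p := c) (a := a) (c := p)
    (w := fun t => w t * ((-1) ^ t.1 * (-1) ^ (t.2 + 1)))
    (f := fun k r t => (((t.2 + 1 : ℕ) : ℂ) ^ k)⁻¹ * (((t.1 + (t.2 + 1 : ℕ) : ℤ) : ℂ) ^ r)⁻¹)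
    (τ := fun k r => T q (s + k) (b + r) (-1) 1)
    fun k r => by simpa [mul_assoc] using hmul hneg hneg 0 k r
  have hone := hasSum_mul_middleBlock (p := p) (a := a) (c := c) (w := fun t => w t * (-1) ^ t.1)
    (f := fun k r t => ((t.1 : ℂ) ^ k)⁻¹ * (((t.1 + (t.2 + 1 : ℕ) : ℤ) : ℂ) ^ r)⁻¹)
    (τ := fun k r => T (q + k) s (b + r) (-1) (-1))
    fun k r => by simpa [mul_assoc] using hmul hneg norm_one k 0 r
  have hone' := hasSum_mul_middleBlock (p := c) (a := a) (c := p) (w := fun t => w t * (-1) ^ t.1)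
    (f := fun k r t => (((t.2 + 1 : ℕ) : ℂ) ^ k)⁻¹ * (((t.1 + (t.2 + 1 : ℕ) : ℤ) : ℂ) ^ r)⁻¹)
    (τ := fun k r => T q (s + k) (b + r) (-1) (-1))
    fun k r => by simpa [mul_assoc] using hmul hneg norm_one 0 k r
  rw [J2_eq_blocks]
  refine ((((hzero.mul_left _).mul_left 2).add ((htwo.mul_left _).mul_left 2)).add
    ((hone.mul_left _).mul_left 2)).add ((hone'.mul_left _).mul_left 2) |>.congr_fun fun t => ?_
  rcases eq_or_ne (w t) 0 with h | h
  · simp only [show tornheimTerm q s b 1 (-1) t = 0 from h, h, zero_mul, mul_zero, add_zero]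
  obtain ⟨hm, hmn⟩ := ne_zero_of_tornheimTerm_ne_zero hq hb h
  rw [Fin.sum_univ_three, poleResidue_poles_zero hc, poleResidue_poles_one hp hc hm hmn,
    poleResidue_poles_two hp]
  ring

end Blocks

section Orderings

/-- The summand of `Zlam2` as a function of four integer points, `l`, `m`, `n` being their
successive differences. As `l + n` has the parity of the sum of the points, the sign is symmetric in
them. -/
noncomputable def fourPointTerm (s₁ s₂ s₃ s₄ s₅ s₆ : ℂ) (P : Fin 4 → ℤ) : ℂ :=
  (-1) ^ (∑ i, P i) *
    ((((P 0 - P 1 : ℤ) : ℂ) ^ s₁)⁻¹ * (((P 1 - P 2 : ℤ) : ℂ) ^ s₂)⁻¹ *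
      (((P 2 - P 3 : ℤ) : ℂ) ^ s₃)⁻¹ * (((P 0 - P 2 : ℤ) : ℂ) ^ s₄)⁻¹ *
      (((P 1 - P 3 : ℤ) : ℂ) ^ s₅)⁻¹ * (((P 0 - P 3 : ℤ) : ℂ) ^ s₆)⁻¹)

theorem fourPointTerm_sub (s₁ s₂ s₃ s₄ s₅ s₆ : ℂ) (P : Fin 4 → ℤ) (d : ℤ) :
    fourPointTerm s₁ s₂ s₃ s₄ s₅ s₆ (fun i => P i - d) =
      fourPointTerm s₁ s₂ s₃ s₄ s₅ s₆ P := by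
  have hsign : (-1 : ℂ) ^ (∑ i, (P i - d)) = (-1) ^ (∑ i, P i) := by
    rw [show ∑ i, (P i - d) = ∑ i, P i + 2 * (-2 * d) by simp [sum_sub_distrib]; ring,
      zpow_add₀ (by norm_num), (even_two_mul _).neg_one_zpow, mul_one]
  simp only [fourPointTerm, hsign, sub_sub_sub_cancel_right]

/-- The decreasing points, the last one at the origin, with gaps `u.1 + 1`, `u.2.1 + 1` and
`u.2.2 + 1`. -/
def heights (u : ℕ × ℕ × ℕ) : Fin 4 → ℤ :=
  ![(u.1 + 1) + (u.2.1 + 1) + (u.2.2 + 1), (u.2.1 + 1) + (u.2.2 + 1), u.2.2 + 1, 0]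

theorem heights_strictAnti (u : ℕ × ℕ × ℕ) : StrictAnti (heights u) := by
  refine Fin.strictAnti_iff_succ_lt.mpr fun i => ?_
  fin_cases i <;> simp [heights]

theorem exists_heights_eq_sub {Q : Fin 4 → ℤ} (hQ : StrictAnti Q) :
    ∃ u, ∀ i, heights u i = Q i - Q 3 := by
  have h01 : Q 1 < Q 0 := hQ (by decide)
  have h12 : Q 2 < Q 1 := hQ (by decide)
  have h23 : Q 3 < Q 2 := hQ (by decide)
  refine ⟨((Q 0 - Q 1 - 1).toNat, (Q 1 - Q 2 - 1).toNat, (Q 2 - Q 3 - 1).toNat), fun i => ?_⟩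
  fin_cases i <;> simp [heights] <;> omega

theorem eq_of_heights_sub_eq {u v : ℕ × ℕ × ℕ} {d : ℤ}
    (h : ∀ i, heights u i - heights v i = d) : u = v := by
  have h0 := h 0
  have h1 := h 1
  have h2 := h 2
  have h3 := h 3
  simp only [heights, Matrix.cons_val] at h0 h1 h2 h3
  ext <;> omega

theorem Zlam2_eq_tsum_fourPointTerm (s₁ s₂ s₃ s₄ s₅ s₆ : ℂ) :
    Zlam2 s₁ s₂ s₃ s₄ s₅ s₆ = ∑' u, fourPointTerm s₁ s₂ s₃ s₄ s₅ s₆ (heights u) := by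
  refine tsum_congr fun u => ?_
  have hsign : (-1 : ℂ) ^ (∑ i, heights u i) = (-1) ^ (u.1 + 1 + (u.2.2 + 1)) := by
    rw [show ∑ i, heights u i = (u.1 + 1 + (u.2.2 + 1) : ℕ) + 2 * (u.2.1 + 1 + (u.2.2 + 1) : ℕ) by
        simp only [heights, Fin.sum_univ_four, Matrix.cons_val]; push_cast; ring,
      zpow_add₀ (by norm_num), (even_two_mul _).neg_one_zpow, mul_one, zpow_natCast]
  rw [fourPointTerm, hsign, div_eq_mul_inv]
  simp only [mul_inv, heights, Matrix.cons_val]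
  push_cast
  ring_nf

/-- The positions, in decreasing order, of four points of which the third lies above the last; the
`k`-th term of `Scomb` comes from the `k`-th ordering. -/
def ranks : Fin 12 → Fin 4 → Fin 4 :=
  ![![0, 1, 2, 3], ![1, 0, 2, 3], ![2, 0, 1, 3], ![3, 0, 1, 2], ![0, 2, 1, 3], ![0, 3, 1, 2],
    ![1, 2, 0, 3], ![1, 3, 0, 2], ![2, 3, 0, 1], ![2, 1, 0, 3], ![3, 1, 0, 2], ![3, 2, 0, 1]]

theorem ranks_two_lt_ranks_three (k : Fin 12) : ranks k 2 < ranks k 3 := by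
  revert k; decide

theorem ranks_bijective (k : Fin 12) : Function.Bijective (ranks k) := by
  revert k; decide

set_option maxRecDepth 10000 in
theorem exists_ranks_eq : ∀ ρ : Fin 4 → Fin 4, Function.Injective ρ → ρ 2 < ρ 3 →
    ∃ k, ranks k = ρ := by
  decide

set_option maxRecDepth 10000 in
theorem ranks_eq_of_lt_iff_lt : ∀ k k' : Fin 12,
    (∀ i j, ranks k i < ranks k j ↔ ranks k' i < ranks k' j) → k = k' := by
  decide

theorem inv_intCast_sub_pow_symm (x y : ℤ) (k : ℕ) :
    (((x - y : ℤ) : ℂ) ^ (k : ℂ))⁻¹ = (-1) ^ k * (((y - x : ℤ) : ℂ) ^ (k : ℂ))⁻¹ := by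
  rw [← neg_sub, Int.cast_neg, cpow_natCast, cpow_natCast, neg_pow, mul_inv, ← inv_pow, inv_neg_one]

theorem sum_tsum_fourPointTerm_ranks (p q a b c : ℕ) (s : ℂ) :
    ∑ k, ∑' u, fourPointTerm p q s a b c (heights u ∘ ranks k) = Scomb Zlam2 p q a b c s := by
  have hterm (k : Fin 12) : ∑' u, fourPointTerm p q s a b c (heights u ∘ ranks k) =
      ![Zlam2 p q s a b c, (-1) ^ p * Zlam2 p a s q c b, (-1) ^ (p + a) * Zlam2 q a c p s b,
        (-1) ^ (p + a + c) * Zlam2 q s c b a p, (-1) ^ q * Zlam2 a q b p s c,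
        (-1) ^ (q + b) * Zlam2 a s b c q p, (-1) ^ (q + a) * Zlam2 a p b q c s,
        (-1) ^ (q + a + b) * Zlam2 a c b s p q, (-1) ^ (q + a + b + c) * Zlam2 s c p a b q,
        (-1) ^ (p + q + a) * Zlam2 q p c a b s, (-1) ^ (p + q + a + c) * Zlam2 q b c s p a,
        (-1) ^ (p + q + a + b + c) * Zlam2 s b p q c a] k := by
    simp only [Zlam2_eq_tsum_fourPointTerm, ← tsum_mul_left, fourPointTerm, Function.comp_apply,
      (ranks_bijective k).sum_comp (heights _)]
    fin_cases k
    all_goals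
      refine tsum_congr fun u => ?_
      have hflip (i j : Fin 4) (_ : j < i) (k : ℕ) :=
        inv_intCast_sub_pow_symm (heights u i) (heights u j) k
      simp only [ranks, Fin.reduceFinMk, Matrix.cons_val, hflip 1 0 (by decide),
        hflip 2 0 (by decide), hflip 3 0 (by decide), hflip 2 1 (by decide), hflip 3 1 (by decide),
        hflip 3 2 (by decide)]
    all_goals ring
  simp only [hterm, Fin.sum_univ_succ, Fin.isValue, Matrix.cons_val_zero, Matrix.cons_val_succ,
    univ_unique, Fin.default_eq_zero, Matrix.cons_val_fin_one, sum_const, card_singleton, one_smul,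
    Scomb]
  ring

/-- The four points whose successive differences are the `l`, `m`, `n` of `tripleTerm`, the last one
at the origin. -/
def points (t : (ℤ × ℕ) × ℤ) : Fin 4 → ℤ :=
  ![t.2 + (t.1.1 + (t.1.2 + 1)), t.1.1 + (t.1.2 + 1), t.1.2 + 1, 0]

theorem points_injective : Function.Injective points := by
  intro t t' h
  have h0 := congrFun h 0
  have h1 := congrFun h 1
  have h2 := congrFun h 2
  simp only [points, Matrix.cons_val] at h0 h1 h2
  ext <;> omega

/-- The triple `((m, n - 1), l)` whose `points` are a translate of `P`; because of the truncation in
the entry `n - 1` this requires `P 3 < P 2`. -/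
def gaps (P : Fin 4 → ℤ) : (ℤ × ℕ) × ℤ :=
  ((P 1 - P 2, (P 2 - P 3 - 1).toNat), P 0 - P 1)

theorem points_gaps {P : Fin 4 → ℤ} (hP : P 3 < P 2) (i : Fin 4) :
    points (gaps P) i = P i - P 3 := by
  fin_cases i <;> simp [points, gaps] <;> omega

variable {p q a b c : ℕ} {s : ℂ}

theorem tripleTerm_eq_fourPointTerm (hp : 0 < p) (ha : 0 < a) (hc : 0 < c) (t : (ℤ × ℕ) × ℤ) :
    tripleTerm p q a b c s t = fourPointTerm p q s a b c (points t) := by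
  have hsign : (-1 : ℂ) ^ (∑ i, points t i) = (-1) ^ t.2 * (-1) ^ (t.1.2 + 1) := by
    rw [show ∑ i, points t i = t.2 + (t.1.2 + 1 : ℕ) + 2 * (t.1.1 + (t.1.2 + 1)) by
        simp only [points, Fin.sum_univ_four, Matrix.cons_val]; push_cast; ring,
      zpow_add₀ (by norm_num), zpow_add₀ (by norm_num), (even_two_mul _).neg_one_zpow, mul_one,
      zpow_natCast]
  rw [tripleTerm_eq hp ha hc, fourPointTerm, hsign]
  simp only [tornheimTerm, points, Matrix.cons_val, cpow_natCast, one_zpow]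
  push_cast
  ring_nf

theorem injective_points_of_tripleTerm_ne_zero (hp : 0 < p) (hq : 0 < q) (ha : 0 < a) (hb : 0 < b)
    (hc : 0 < c) {t : (ℤ × ℕ) × ℤ} (ht : tripleTerm p q a b c s t ≠ 0) :
    Function.Injective (points t) := by
  rw [tripleTerm_eq hp ha hc] at ht
  obtain ⟨hm, hmn⟩ := ne_zero_of_tornheimTerm_ne_zero hq hb (left_ne_zero_of_mul ht)
  simp only [ne_eq, mul_eq_zero, inv_eq_zero, pow_eq_zero_iff hp.ne', pow_eq_zero_iff ha.ne',
    pow_eq_zero_iff hc.ne', Int.cast_eq_zero, not_or] at ht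
  intro i j
  fin_cases i <;> fin_cases j <;> simp [points] <;> grind

/-- The triple `((m, n - 1), l)` attached to an ordering of four points `P i` with `P 3 < P 2` and
to the gaps between neighbouring points. -/
def chamber (x : Fin 12 × ℕ × ℕ × ℕ) : (ℤ × ℕ) × ℤ :=
  gaps (heights x.2 ∘ ranks x.1)

theorem points_chamber (x : Fin 12 × ℕ × ℕ × ℕ) (i : Fin 4) :
    points (chamber x) i = heights x.2 (ranks x.1 i) - heights x.2 (ranks x.1 3) :=
  points_gaps (P := heights x.2 ∘ ranks x.1)
    (heights_strictAnti x.2 (ranks_two_lt_ranks_three x.1)) i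

theorem chamber_injective : Function.Injective chamber := by
  rintro ⟨k, u⟩ ⟨k', v⟩ h
  have hdiff (i : Fin 4) : heights u (ranks k i) - heights u (ranks k 3) =
      heights v (ranks k' i) - heights v (ranks k' 3) := by
    rw [← points_chamber (k, u), ← points_chamber (k', v), h]
  obtain rfl : k = k' := by
    refine ranks_eq_of_lt_iff_lt k k' fun i j => ?_
    rw [← (heights_strictAnti u).lt_iff_gt, ← (heights_strictAnti v).lt_iff_gt]
    have hi := hdiff i
    have hj := hdiff j
    omega
  obtain rfl : u = v := eq_of_heights_sub_eq
    (d := heights u (ranks k 3) - heights v (ranks k 3)) <| (ranks_bijective k).2.forall.mpr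
      fun i => by linarith [hdiff i]
  rfl

theorem mem_range_chamber {t : (ℤ × ℕ) × ℤ} (ht : Function.Injective (points t)) :
    t ∈ Set.range chamber := by
  set σ := Tuple.sort (fun i => -points t i)
  have hQ : StrictAnti (points t ∘ σ) := by
    have hmono := (Tuple.monotone_sort fun i => -points t i).strictMono_of_injective
      ((neg_injective.comp ht).comp σ.injective)
    exact fun i j hij => neg_lt_neg_iff.mp (hmono hij)
  have hlt : σ.symm 2 < σ.symm 3 := by
    rw [← hQ.lt_iff_gt]
    simp only [Function.comp_apply, Equiv.apply_symm_apply, points, Matrix.cons_val]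
    omega
  obtain ⟨k, hk⟩ := exists_ranks_eq σ.symm σ.symm.injective hlt
  obtain ⟨u, hu⟩ := exists_heights_eq_sub hQ
  refine ⟨(k, u), points_injective (funext fun i => ?_)⟩
  rw [points_chamber, hk, hu, hu]
  simp [points]

theorem tsum_tripleTerm_eq_Scomb (hp : 0 < p) (hq : 0 < q) (ha : 0 < a) (hb : 0 < b) (hc : 0 < c)
    (hs : 1 < s.re) : ∑' t, tripleTerm p q a b c s t = Scomb Zlam2 p q a b c s := by
  have hchamber (x : Fin 12 × ℕ × ℕ × ℕ) : tripleTerm p q a b c s (chamber x) =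
      fourPointTerm p q s a b c (heights x.2 ∘ ranks x.1) := by
    rw [tripleTerm_eq_fourPointTerm hp ha hc, funext (points_chamber x)]
    exact fourPointTerm_sub _ _ _ _ _ _ (heights x.2 ∘ ranks x.1) _
  have hsummable := (summable_tripleTerm hp hq ha hb hc hs).comp_injective chamber_injective
  calc ∑' t, tripleTerm p q a b c s t
      = ∑' x, tripleTerm p q a b c s (chamber x) :=
        (chamber_injective.tsum_eq fun t ht => mem_range_chamber
          (injective_points_of_tripleTerm_ne_zero hp hq ha hb hc ht)).symm
    _ = ∑ k, ∑' u, tripleTerm p q a b c s (chamber (k, u)) :=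
        hsummable.tsum_prod.trans (tsum_fintype _)
    _ = Scomb Zlam2 p q a b c s := by simp only [hchamber, sum_tsum_fourPointTerm_ranks]

end Orderings

/-- Functional relation for `ζ₃(·,λ₂∨;SU(4))`
(Theorem 5.1 of Komori–Matsumoto–Tsumura). -/
theorem functional_relation_SU4_lam2 (p q a b c : ℕ) (hp : 0 < p) (hq : 0 < q) (ha : 0 < a)
    (hb : 0 < b) (hc : 0 < c) (s : ℂ) (hs : 1 < s.re) :
    Scomb Zlam2 p q a b c s = J2 p q a b c s := by
  have hJ2 := hasSum_tornheimTerm_mul_sum_poleResidue hp hq (a := a) hb hc hs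
  calc Scomb Zlam2 p q a b c s
      = ∑' t, tripleTerm p q a b c s t := (tsum_tripleTerm_eq_Scomb hp hq ha hb hc hs).symm
    _ = ∑' t, ∑' l, tripleTerm p q a b c s (t, l) :=
        (summable_tripleTerm hp hq ha hb hc hs).tsum_prod
    _ = ∑' t, tornheimTerm q s b 1 (-1) t * (2 * ∑ k, poleResidue (poles t) ![p, a, c] k) :=
        tsum_congr (tsum_tripleTerm hp hq ha hb hc hs)
    _ = J2 p q a b c s := hJ2.tsum_eq
end

section
/- Let p, q, a, b, c be positive integers and let s be a complex number with Re(s) > 1. Then S_{A₃}(p,q,a,b,c,s) = 2(−1)^p Σ_{j=0}^{⌊p/2⌋} ζ(2j) Σ_{ω=0}^{p−2j} C(ω+a−1, ω) C(p+c−2j−ω−1, c−1) T(q+a+ω, s, p+b+c−2j−ω; 1, 1) + 2(−1)^{p+a} Σ_{j=0}^{⌊c/2⌋} ζ(2j) Σ_{ω=0}^{c−2j} C(ω+a−1, ω) C(p+c−2j−ω−1, p−1) T(q, s+a+ω, p+b+c−2j−ω; 1, 1) + 2(−1)^p Σ_{j=0}^{⌊a/2⌋} ζ(2j) Σ_{ω=0}^{p−1}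 C(ω+a−2j, ω) C(p+c−2−ω, c−1) T(q+a−2j+ω+1, s, p+b+c−1−ω; 1, 1) + 2(−1)^{p+a} Σ_{j=0}^{⌊a/2⌋} ζ(2j) Σ_{ω=0}^{c−1} C(ω+a−2j, ω) C(p+c−2−ω, p−1) T(q, s+a−2j+ω+1, p+b+c−1−ω; 1, 1), where C(n,k) denotes the binomial coefficient and ζ(0) = −1/2. -/
open Complex Finset

/-- `ζ₃(s₁,…,s₆;A₃)`. -/
noncomputable def ZA3 : ℂ → ℂ → ℂ → ℂ → ℂ → ℂ → ℂ := Z3 (fun _ _ _ => 1)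

/-- The right-hand side `J₀` of the functional relation for `ζ₃(·;A₃)`. -/
noncomputable def J0 (p q a b c : ℕ) (s : ℂ) : ℂ :=
  2 * (-1 : ℂ) ^ p * ∑ j ∈ range (p / 2 + 1), riemannZeta (2 * j) *
      ∑ ω ∈ range (p - 2 * j + 1),
        (Nat.choose (ω + a - 1) ω : ℂ) * (Nat.choose (p + c - 2 * j - ω - 1) (c - 1) : ℂ) *
          T (q + a + ω) s (p + b + c - 2 * j - ω) 1 1 +
  2 * (-1 : ℂ) ^ (p + a) * ∑ j ∈ range (c / 2 + 1), riemannZeta (2 * j) *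
      ∑ ω ∈ range (c - 2 * j + 1),
        (Nat.choose (ω + a - 1) ω : ℂ) * (Nat.choose (p + c - 2 * j - ω - 1) (p - 1) : ℂ) *
          T q (s + a + ω) (p + b + c - 2 * j - ω) 1 1 +
  2 * (-1 : ℂ) ^ p * ∑ j ∈ range (a / 2 + 1), riemannZeta (2 * j) *
      ∑ ω ∈ range p,
        (Nat.choose (ω + a - 2 * j) ω : ℂ) * (Nat.choose (p + c - 2 - ω) (c - 1) : ℂ) *
          T (q + a - 2 * j + ω + 1) s (p + b + c - 1 - ω) 1 1 +
  2 * (-1 : ℂ) ^ (p + a) * ∑ j ∈ range (a / 2 + 1), riemannZeta (2 * j) *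
      ∑ ω ∈ range c,
        (Nat.choose (ω + a - 2 * j) ω : ℂ) * (Nat.choose (p + c - 2 - ω) (p - 1) : ℂ) *
          T q (s + ((a - 2 * j : ℕ) : ℂ) + ω + 1) (p + b + c - 1 - ω) 1 1

/-!
Sum `1 / (m ^ q * n ^ s * (m + n) ^ b * l ^ p * (l + m) ^ a * (l + m + n) ^ c)` over all integers
`l`, `m` and all `n ≥ 1` for which no factor vanishes, in two ways. The hyperplanes on which a
factor vanishes cut this domain into twelve chambers, on each of which the sum is, up to sign, one
of the series of `A₃` type on the left-hand side. On the other hand, the sum over `l` alone is that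
of a rational function with poles at `0`, `-m` and `-(m + n)`, so the residue theorem for
`π cot (π z)` evaluates it through even zeta values and Taylor coefficients; summing the latter over
`m` and `n` produces the Tornheim sums `T` on the right-hand side.
-/

namespace RootSystemA3

section PartialFractions

variable {R : Type*} [CommSemiring R]

/-- The polynomial in `x` that occurs in the partial fraction decomposition of `x ^ p * y ^ c` when
`x * y = d * (x + y)`, that is, when `1 / x + 1 / y = 1 / d`. -/
def partialFraction (d : R) (p c : ℕ) (x : R) : R :=
  ∑ ω ∈ range p, (c.multichoose (p - 1 - ω) : R) * d ^ (c + (p - 1 - ω)) * x ^ (ω + 1)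

@[simp]
lemma partialFraction_zero_left (d : R) (c : ℕ) (x : R) : partialFraction d 0 c x = 0 := by
  simp [partialFraction]

lemma partialFraction_zero_right (d : R) {p : ℕ} (hp : 0 < p) (x : R) :
    partialFraction d p 0 x = x ^ p := by
  rw [partialFraction, sum_eq_single_of_mem (p - 1) (by simpa using hp)]
  · simp [Nat.sub_add_cancel hp]
  · intro ω hω hne
    obtain ⟨k, hk⟩ : ∃ k, p - 1 - ω = k + 1 := ⟨p - 2 - ω, by grind⟩
    simp [hk]

lemma partialFraction_succ_succ (d : R) (p c : ℕ) (x : R) :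
    partialFraction d (p + 1) (c + 1) x =
      d * (partialFraction d (p + 1) c x + partialFraction d p (c + 1) x) := by
  have term_eq : ∀ ω ∈ range p,
      ((c + 1).multichoose (p - ω) : R) * d ^ (c + 1 + (p - ω)) * x ^ (ω + 1) =
        d * ((c.multichoose (p - ω) : R) * d ^ (c + (p - ω)) * x ^ (ω + 1)) +
          d * (((c + 1).multichoose (p - 1 - ω) : R) * d ^ (c + 1 + (p - 1 - ω)) *
            x ^ (ω + 1)) := by
    intro ω hω
    obtain ⟨k, hk, hk'⟩ : ∃ k, p - ω = k + 1 ∧ p - 1 - ω = k := ⟨p - 1 - ω, by grind⟩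
    rw [hk, hk', Nat.multichoose_succ_succ]
    push_cast
    ring
  simp only [partialFraction, Nat.add_sub_cancel]
  rw [sum_range_succ, sum_range_succ, sum_congr rfl term_eq, sum_add_distrib, ← mul_sum, ← mul_sum]
  simp only [tsub_self, Nat.multichoose_zero_right]
  ring

theorem pow_mul_pow_eq_partialFraction {d x y : R} (h : x * y = d * (x + y)) {p c : ℕ}
    (hpc : 0 < p + c) :
    x ^ p * y ^ c = partialFraction d p c x + partialFraction d c p y := by
  induction p generalizing c with
  | zero => rw [zero_add] at hpc; simp [partialFraction_zero_right d hpc]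
  | succ p ihp =>
    induction c with
    | zero => simp [partialFraction_zero_right d p.succ_pos]
    | succ c ihc =>
      calc x ^ (p + 1) * y ^ (c + 1)
          = x ^ p * y ^ c * (x * y) := by ring
        _ = d * (x ^ (p + 1) * y ^ c + x ^ p * y ^ (c + 1)) := by rw [h]; ring
        _ = _ := by
          rw [ihc (by omega), ihp (by omega), partialFraction_succ_succ,
            partialFraction_succ_succ]
          ring

end PartialFractions

section NegativePowers

open PowerSeries

variable {K : Type*} [Field K]

/-- The power series of `(X + x) ^ (-k)`, for `x ≠ 0`. -/
noncomputable def invLinearPow (x : K) (k : ℕ) : K⟦X⟧ :=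
  mk fun n ↦ (-1) ^ n * (k.multichoose n : K) * (x ^ (k + n))⁻¹

lemma coeff_invLinearPow (x : K) (k n : ℕ) :
    coeff n (invLinearPow x k) = (-1) ^ n * (k.multichoose n : K) * (x ^ (k + n))⁻¹ :=
  coeff_mk _ _

lemma invLinearPow_zero (x : K) : invLinearPow x 0 = 1 := by
  ext (_ | n) <;> simp [coeff_invLinearPow, coeff_one]

lemma linear_mul_invLinearPow_succ {x : K} (hx : x ≠ 0) (k : ℕ) :
    (X + C x) * invLinearPow x (k + 1) = invLinearPow x k := by
  ext (_ | n)
  · rw [add_mul, map_add, coeff_zero_X_mul, coeff_C_mul, zero_add]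
    simp only [coeff_invLinearPow, Nat.multichoose_zero_right, add_zero, pow_succ]
    field_simp
  · rw [add_mul, map_add, coeff_succ_X_mul, coeff_C_mul]
    simp only [coeff_invLinearPow, Nat.multichoose_succ_succ]
    push_cast
    field_simp
    ring

lemma linear_pow_mul_invLinearPow {x : K} (hx : x ≠ 0) (k : ℕ) :
    (X + C x) ^ k * invLinearPow x k = 1 := by
  induction k with
  | zero => simp [invLinearPow_zero]
  | succ k ih => rw [pow_succ, mul_assoc, linear_mul_invLinearPow_succ hx, ih]

/-- Up to the sign `(-1) ^ n`, the `n`-th Taylor coefficient at `0` of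
`1 / ((X + u) ^ a * (X + w) ^ c)`. -/
def taylorKernel (a c n : ℕ) (u w : K) : K :=
  ∑ i ∈ antidiagonal n,
    (a.multichoose i.1 : K) * (c.multichoose i.2 : K) * ((u ^ (a + i.1))⁻¹ * (w ^ (c + i.2))⁻¹)

lemma coeff_invLinearPow_mul_invLinearPow (u w : K) (a c n : ℕ) :
    coeff n (invLinearPow u a * invLinearPow w c) = (-1) ^ n * taylorKernel a c n u w := by
  rw [coeff_mul, taylorKernel, mul_sum]
  refine sum_congr rfl fun i hi ↦ ?_
  rw [coeff_invLinearPow, coeff_invLinearPow, ← mem_antidiagonal.mp hi, pow_add]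
  ring

lemma invLinearPow_eq_pow {x : K} (hx : x ≠ 0) (k : ℕ) :
    invLinearPow x k = invLinearPow x 1 ^ k := by
  have hX : (X + C x) * invLinearPow x 1 = 1 := by
    simpa using linear_pow_mul_invLinearPow hx 1
  calc invLinearPow x k
      = ((X + C x) * invLinearPow x 1) ^ k * invLinearPow x k := by rw [hX, one_pow, one_mul]
    _ = (X + C x) ^ k * invLinearPow x k * invLinearPow x 1 ^ k := by rw [mul_pow]; ring
    _ = invLinearPow x 1 ^ k := by rw [linear_pow_mul_invLinearPow hx, one_mul]

lemma multichoose_succ_comm (m n : ℕ) : (m + 1).multichoose n = (n + 1).multichoose m := by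
  rw [Nat.multichoose_eq, Nat.multichoose_eq, show m + 1 + n - 1 = m + n by omega,
    show n + 1 + m - 1 = m + n by omega, Nat.choose_symm_add]

lemma coeff_partialFraction {f : K⟦X⟧} {e u : K} {k : ℕ}
    (hf : ∀ ω, coeff k (f ^ (ω + 1)) =
      e * (((ω + 1).multichoose k : K) * (u ^ (ω + 1 + k))⁻¹))
    (w : K) {p : ℕ} (hp : 0 < p) (c : ℕ) :
    coeff k (partialFraction (C w⁻¹) p c f) = e * taylorKernel (k + 1) c (p - 1) u w := by
  obtain ⟨p, rfl⟩ := Nat.exists_eq_add_one.mpr hp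
  rw [partialFraction, map_sum, taylorKernel, Nat.add_sub_cancel,
    Finset.Nat.sum_antidiagonal_eq_sum_range_succ_mk, mul_sum]
  refine sum_congr rfl fun ω _ ↦ ?_
  rw [← map_natCast C, ← map_pow, ← map_mul, coeff_C_mul, hf, multichoose_succ_comm,
    show ω + 1 + k = k + 1 + ω by omega, inv_pow]
  ring

lemma neg_invLinearPow_neg_pow {m : K} (hm : m ≠ 0) (ω : ℕ) :
    (-invLinearPow (-m) 1) ^ ω = (-1) ^ ω * invLinearPow (-m) ω := by
  rw [neg_pow, ← invLinearPow_eq_pow (neg_ne_zero.mpr hm)]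

lemma coeff_neg_invLinearPow_neg_pow {m : K} (hm : m ≠ 0) (ω k : ℕ) :
    coeff k ((-invLinearPow (-m) 1) ^ ω) = (ω.multichoose k : K) * (m ^ (ω + k))⁻¹ := by
  have sign : (-1 : K) ^ ω * (-1) ^ k * (-1) ^ (ω + k) = 1 := by
    rw [← pow_add, ← mul_pow, neg_one_mul, neg_neg, one_pow]
  rw [neg_invLinearPow_neg_pow hm, ← map_one C, ← map_neg, ← map_pow, coeff_C_mul,
    coeff_invLinearPow, neg_pow m, mul_inv, ← inv_pow, inv_neg_one]
  linear_combination (ω.multichoose k : K) * (m ^ (ω + k))⁻¹ * sign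

/-- Since `(m - X) + (X + n)` is constant, `pow_mul_pow_eq_partialFraction` applies to the inverses
of `m - X` and `X + n`. -/
lemma coeff_invLinearPow_neg_mul_invLinearPow {m n : K} (hm : m ≠ 0) (hn : n ≠ 0)
    (hmn : m + n ≠ 0) {p c : ℕ} (hp : 0 < p) (hc : 0 < c) (k : ℕ) :
    coeff k (invLinearPow (-m) p * invLinearPow n c) =
      (-1) ^ p * (taylorKernel (k + 1) c (p - 1) m (m + n) +
        (-1) ^ k * taylorKernel (k + 1) p (c - 1) n (m + n)) := by
  set f : K⟦X⟧ := -invLinearPow (-m) 1 with hf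
  set g : K⟦X⟧ := invLinearPow n 1 with hg
  have f_mul : (C m - X) * f = 1 := by
    rw [← linear_pow_mul_invLinearPow (neg_ne_zero.mpr hm) 1, map_neg, hf]
    ring
  have g_mul : (X + C n) * g = 1 := by simpa using linear_pow_mul_invLinearPow hn 1
  have hC : C (m + n)⁻¹ * (C m + C n) = (1 : K⟦X⟧) := by
    rw [← map_add, ← map_mul, inv_mul_cancel₀ hmn, map_one]
  have hfg : f * g = C (m + n)⁻¹ * (f + g) := by
    linear_combination (-f * g) * hC + C (m + n)⁻¹ * f * g_mul + C (m + n)⁻¹ * g * f_mul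
  have f_coeff (ω : ℕ) : coeff k (f ^ (ω + 1)) =
      1 * (((ω + 1).multichoose k : K) * (m ^ (ω + 1 + k))⁻¹) := by
    rw [hf, coeff_neg_invLinearPow_neg_pow hm, one_mul]
  have g_coeff (ω : ℕ) : coeff k (g ^ (ω + 1)) =
      (-1) ^ k * (((ω + 1).multichoose k : K) * (n ^ (ω + 1 + k))⁻¹) := by
    rw [hg, ← invLinearPow_eq_pow hn, coeff_invLinearPow, mul_assoc]
  calc coeff k (invLinearPow (-m) p * invLinearPow n c)
      = coeff k (C ((-1) ^ p) * (f ^ p * g ^ c)) := by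
        rw [hf, neg_invLinearPow_neg_pow hm, ← invLinearPow_eq_pow hn, map_pow, map_neg, map_one,
          ← mul_assoc, ← mul_assoc, ← mul_pow, neg_one_mul, neg_neg, one_pow, one_mul]
    _ = _ := by
        rw [coeff_C_mul, pow_mul_pow_eq_partialFraction hfg (by omega), map_add,
          coeff_partialFraction f_coeff _ hp, coeff_partialFraction g_coeff _ hc, one_mul]

end NegativePowers

section SymmetricSums

open Filter Topology SummationFilter

section Shift

variable {G : Type*} [AddCommGroup G]

lemma sum_Icc_neg_succ (f : ℤ → G) (N : ℕ) :
    ∑ l ∈ Icc (-((N + 1 : ℕ) : ℤ)) (N + 1 : ℕ), f l =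
      ∑ l ∈ Icc (-(N : ℤ)) N, f l + (f (N + 1) + f (-(N + 1))) := by
  have : Icc (-((N + 1 : ℕ) : ℤ)) (N + 1 : ℕ) =
      insert (-((N : ℤ) + 1)) (insert ((N : ℤ) + 1) (Icc (-(N : ℤ)) N)) := by
    ext x; simp only [mem_Icc, mem_insert]; push_cast; omega
  rw [this, sum_insert (by simp only [mem_Icc, mem_insert]; omega), sum_insert (by simp)]
  abel

lemma sum_Icc_neg_comp_add_one (f : ℤ → G) (N : ℕ) :
    ∑ l ∈ Icc (-(N : ℤ)) N, f (l + 1) =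
      ∑ l ∈ Icc (-(N : ℤ)) N, f l + (f (N + 1) - f (-N)) := by
  induction N with
  | zero => simp
  | succ N ih =>
    rw [sum_Icc_neg_succ, sum_Icc_neg_succ, ih, neg_add_rev, neg_add_cancel_comm]
    push_cast
    rw [neg_add_rev]
    abel

variable [TopologicalSpace G] [IsTopologicalAddGroup G]

lemma hasSum_symmetricIcc_comp_add_one_iff {f : ℤ → G} {a : G}
    (hf : Tendsto f cofinite (𝓝 0)) :
    HasSum (fun l ↦ f (l + 1)) a (symmetricIcc ℤ) ↔ HasSum f a (symmetricIcc ℤ) := by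
  rw [Int.cofinite_eq, tendsto_sup] at hf
  have boundary : Tendsto (fun N : ℕ ↦ f (N + 1) - f (-N)) atTop (𝓝 0) := by
    rw [← sub_zero (0 : G)]
    refine (hf.2.comp ?_).sub (hf.1.comp ?_)
    · exact tendsto_atTop_add_const_right _ _ tendsto_natCast_atTop_atTop
    · exact tendsto_neg_atTop_atBot.comp tendsto_natCast_atTop_atTop
  simp_rw [hasSum_symmetricIcc_iff, sum_Icc_neg_comp_add_one]
  refine ⟨fun h ↦ ?_, fun h ↦ ?_⟩
  · simpa using h.sub boundary
  · simpa using h.add boundary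

lemma hasSum_symmetricIcc_comp_add {f : ℤ → G} {a : G} (hf : Tendsto f cofinite (𝓝 0))
    (h : HasSum f a (symmetricIcc ℤ)) (r : ℤ) :
    HasSum (fun l ↦ f (l + r)) a (symmetricIcc ℤ) := by
  have hf_add (r : ℤ) : Tendsto (fun l ↦ f (l + r)) cofinite (𝓝 0) :=
    hf.comp (add_left_injective r).tendsto_cofinite
  have step (r : ℤ) : HasSum (fun l ↦ f (l + (r + 1))) a (symmetricIcc ℤ) ↔
      HasSum (fun l ↦ f (l + r)) a (symmetricIcc ℤ) := by
    simp_rw [← hasSum_symmetricIcc_comp_add_one_iff (hf_add r), ← add_right_comm _ r 1, add_assoc]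
  induction r using Int.induction_on with
  | zero => simpa using h
  | succ i ih => exact (step i).mpr ih
  | pred i ih => exact (step (-i - 1)).mp (by simpa using ih)

end Shift

lemma hasSum_ite_mem_zero {ι G : Type*} [DecidableEq ι] [AddCommGroup G] [TopologicalSpace G]
    [IsTopologicalAddGroup G] {L : SummationFilter ι} [L.LeAtTop] {f : ι → G} {a : G}
    (h : HasSum f a L) (S : Finset ι) :
    HasSum (fun i ↦ if i ∈ S then 0 else f i) (a - ∑ i ∈ S, f i) L := by
  have hS : HasSum (fun i ↦ if i ∈ S then f i else 0) (∑ i ∈ S, f i) L := by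
    rw [← sum_congr rfl fun i hi ↦ if_pos hi]
    exact hasSum_sum_of_ne_finset_zero fun i hi ↦ if_neg hi
  exact (h.sub hS).congr_fun fun i ↦ by split_ifs <;> simp

lemma tendsto_inv_pow_cofinite {k : ℕ} (hk : 0 < k) :
    Tendsto (fun l : ℤ ↦ ((l : ℂ) ^ k)⁻¹) cofinite (𝓝 0) := by
  rw [tendsto_zero_iff_norm_tendsto_zero]
  have h : Tendsto (fun l : ℤ ↦ ‖(l : ℝ)‖) cofinite atTop :=
    tendsto_norm_cocompact_atTop.comp Int.tendsto_coe_cofinite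
  exact ((tendsto_pow_atTop hk.ne').comp h).inv_tendsto_atTop.congr fun l ↦ by simp

lemma hasSum_inv_pow_of_even {k : ℕ} (hk : 0 < k) (he : Even k) :
    HasSum (fun l : ℤ ↦ ((l : ℂ) ^ k)⁻¹) (2 * riemannZeta k) (symmetricIcc ℤ) := by
  have h1 : 1 < k := by rcases he with ⟨r, rfl⟩; omega
  have hs : Summable (fun n : ℕ ↦ 1 / (n : ℂ) ^ k) := by
    rw [← summable_norm_iff]
    simpa using Real.summable_one_div_nat_pow.2 h1
  have limit : Tendsto (fun N : ℕ ↦ 2 * ∑ n ∈ range (N + 1), 1 / (n : ℂ) ^ k) atTop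
      (𝓝 (2 * riemannZeta k)) := by
    rw [zeta_nat_eq_tsum_of_gt_one h1]
    exact (hs.hasSum.tendsto_sum_nat.comp (tendsto_add_atTop_nat 1)).const_mul 2
  refine hasSum_symmetricIcc_iff.mpr (limit.congr fun N ↦ ?_)
  induction N with
  | zero => simp [hk.ne']
  | succ N ih =>
    rw [sum_Icc_neg_succ, sum_range_succ, mul_add, ih]
    push_cast
    rw [← he.neg_pow ((N : ℂ) + 1), he.neg_pow]
    ring

lemma hasSum_inv_pow_of_odd {k : ℕ} (hk : Odd k) :
    HasSum (fun l : ℤ ↦ ((l : ℂ) ^ k)⁻¹) 0 (symmetricIcc ℤ) := by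
  refine hasSum_symmetricIcc_iff.mpr (tendsto_const_nhds.congr fun N ↦ ?_)
  induction N with
  | zero => simp [hk.pos.ne']
  | succ N ih =>
    rw [sum_Icc_neg_succ, ← ih]
    push_cast
    rw [hk.neg_pow, inv_neg]
    ring

lemma hasSum_inv_sub_pow {k : ℕ} (hk : 0 < k) (r : ℤ) :
    HasSum (fun l : ℤ ↦ (((l : ℂ) - r) ^ k)⁻¹) (if Even k then 2 * riemannZeta k else 0)
      (symmetricIcc ℤ) := by
  have base : HasSum (fun l : ℤ ↦ ((l : ℂ) ^ k)⁻¹) (if Even k then 2 * riemannZeta k else 0)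
      (symmetricIcc ℤ) := by
    split_ifs with he
    · exact hasSum_inv_pow_of_even hk he
    · exact hasSum_inv_pow_of_odd (Nat.not_even_iff_odd.mp he)
  simpa [sub_eq_add_neg] using
    hasSum_symmetricIcc_comp_add (tendsto_inv_pow_cofinite hk) base (-r)

end SymmetricSums

section LaurentExpansions

open scoped LaurentSeries RatFunc

variable {K : Type*} [Field K]

/-- The rational function `1 / (X - r)`. -/
noncomputable def pole (r : K) : RatFunc K := (RatFunc.X - RatFunc.C r)⁻¹

/-- The Laurent expansion of a rational function at the point `x`. -/
noncomputable def expandAt (x : K) : RatFunc K →+* K⸨X⸩ :=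
  (algebraMap (RatFunc K) K⸨X⸩).comp (RatFunc.laurent x).toRingHom

lemma expandAt_C (x y : K) : expandAt x (RatFunc.C y) = HahnSeries.C y := by
  simp only [expandAt, AlgHom.toRingHom_eq_coe, RingHom.coe_comp, RingHom.coe_coe,
    Function.comp_apply, RatFunc.laurent_C]
  rw [← RatFunc.algebraMap_C, ← IsScalarTower.algebraMap_apply]
  simp

lemma expandAt_X (x : K) :
    expandAt x RatFunc.X = HahnSeries.ofPowerSeries ℤ K (PowerSeries.X + PowerSeries.C x) := by
  have hC := expandAt_C (0 : K) x
  simp only [expandAt, AlgHom.toRingHom_eq_coe, RingHom.coe_comp, RingHom.coe_coe,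
    Function.comp_apply, RatFunc.laurent_C, RatFunc.laurent_X] at hC ⊢
  rw [map_add, map_add, hC, RatFunc.coe_X, HahnSeries.ofPowerSeries_X, HahnSeries.ofPowerSeries_C]

lemma expandAt_pole_pow (x r : K) (k : ℕ) :
    expandAt x (pole r ^ k) =
      (HahnSeries.ofPowerSeries ℤ K ((PowerSeries.X + PowerSeries.C (x - r)) ^ k))⁻¹ := by
  rw [pole, inv_pow, map_inv₀, map_pow, map_sub, expandAt_C, expandAt_X, map_pow, map_sub,
    ← HahnSeries.ofPowerSeries_C, ← map_sub, add_sub_assoc]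

lemma expandAt_pole_pow_of_ne {x r : K} (h : x ≠ r) (k : ℕ) :
    expandAt x (pole r ^ k) = HahnSeries.ofPowerSeries ℤ K (invLinearPow (x - r) k) := by
  rw [expandAt_pole_pow]
  refine inv_eq_of_mul_eq_one_right ?_
  rw [← map_mul, linear_pow_mul_invLinearPow (sub_ne_zero.mpr h), map_one]

lemma expandAt_pole_pow_self (r : K) (k : ℕ) :
    expandAt r (pole r ^ k) = HahnSeries.single (-(k : ℤ)) 1 := by
  rw [expandAt_pole_pow, sub_self, map_zero, add_zero, HahnSeries.ofPowerSeries_X_pow,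
    HahnSeries.inv_single, inv_one]

lemma coeff_zero_expandAt_pole_pow (x r : K) {k : ℕ} (hk : 0 < k) :
    (expandAt x (pole r ^ k)).coeff 0 = ((x - r) ^ k)⁻¹ := by
  rcases eq_or_ne x r with rfl | h
  · rw [expandAt_pole_pow_self, HahnSeries.coeff_single_of_ne (by omega)]
    simp [hk.ne']
  · rw [expandAt_pole_pow_of_ne h, ← Nat.cast_zero, HahnSeries.ofPowerSeries_apply_coeff]
    simp [coeff_invLinearPow]

/-- The span of the partial fractions `1 / (X - r) ^ (k + 1)` with `r ∈ S`, that is, the space of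
proper rational functions all of whose poles are in `S`. -/
noncomputable def poleSpan (S : Set K) : Submodule K (RatFunc K) :=
  Submodule.span K {f | ∃ r ∈ S, ∃ k : ℕ, f = pole r ^ (k + 1)}

lemma pole_pow_mem_poleSpan {S : Set K} {r : K} (hr : r ∈ S) {k : ℕ} (hk : 0 < k) :
    pole r ^ k ∈ poleSpan S :=
  Submodule.subset_span ⟨r, hr, k - 1, by rw [Nat.sub_add_cancel hk]⟩

lemma partialFraction_mem_poleSpan {S : Set K} {f : RatFunc K}
    (hf : ∀ ω, f ^ (ω + 1) ∈ poleSpan S) (d : K) (p c : ℕ) :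
    partialFraction (RatFunc.C d) p c f ∈ poleSpan S := by
  refine Submodule.sum_mem _ fun ω _ ↦ ?_
  rw [← map_natCast RatFunc.C, ← map_pow, ← map_mul, ← RatFunc.smul_eq_C_mul]
  exact Submodule.smul_mem _ _ (hf ω)

lemma X_sub_C_mul_pole (r : K) : (RatFunc.X - RatFunc.C r) * pole r = 1 := by
  rw [pole, ← RatFunc.algebraMap_X, ← RatFunc.algebraMap_C, ← map_sub]
  exact mul_inv_cancel₀ (RatFunc.algebraMap_ne_zero (Polynomial.X_sub_C_ne_zero r))

lemma neg_pole_pow_mem_poleSpan {S : Set K} {r : K} (hr : r ∈ S) (ω : ℕ) :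
    (-pole r) ^ (ω + 1) ∈ poleSpan S := by
  rw [← neg_one_smul K, smul_pow]
  exact Submodule.smul_mem _ _ (pole_pow_mem_poleSpan hr ω.succ_pos)

lemma pole_pow_mul_pole_pow_mem_poleSpan {S : Set K} {r t : K} (hr : r ∈ S) (ht : t ∈ S)
    {j k : ℕ} (hj : 0 < j) (hk : 0 < k) : pole r ^ j * pole t ^ k ∈ poleSpan S := by
  rcases eq_or_ne r t with rfl | hrt
  · rw [← pow_add]
    exact pole_pow_mem_poleSpan hr (by omega)
  have hC : RatFunc.C (t - r)⁻¹ * (RatFunc.C t - RatFunc.C r) = 1 := by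
    rw [← map_sub, ← map_mul, inv_mul_cancel₀ (sub_ne_zero.mpr hrt.symm), map_one]
  have pole_mul : pole r * -pole t = RatFunc.C (t - r)⁻¹ * (pole r + -pole t) := by
    linear_combination (pole r * pole t) * hC +
      RatFunc.C (t - r)⁻¹ * pole r * X_sub_C_mul_pole t -
      RatFunc.C (t - r)⁻¹ * pole t * X_sub_C_mul_pole r
  have : pole r ^ j * pole t ^ k = (-1 : K) ^ k • (pole r ^ j * (-pole t) ^ k) := by
    rw [← mul_smul_comm, ← smul_pow, neg_one_smul, neg_neg]
  rw [this, pow_mul_pow_eq_partialFraction pole_mul (by omega)]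
  exact Submodule.smul_mem _ _ (Submodule.add_mem _
    (partialFraction_mem_poleSpan (fun ω ↦ pole_pow_mem_poleSpan hr ω.succ_pos) _ _ _)
    (partialFraction_mem_poleSpan (neg_pole_pow_mem_poleSpan ht) _ _ _))

lemma mul_mem_poleSpan {S : Set K} {f g : RatFunc K} (hf : f ∈ poleSpan S)
    (hg : g ∈ poleSpan S) : f * g ∈ poleSpan S := by
  have closed : poleSpan S * poleSpan S ≤ poleSpan S := by
    rw [poleSpan, Submodule.span_mul_span, Submodule.span_le]
    rintro _ ⟨_, ⟨r, hr, j, rfl⟩, _, ⟨t, ht, k, rfl⟩, rfl⟩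
    exact pole_pow_mul_pole_pow_mem_poleSpan hr ht j.succ_pos k.succ_pos
  exact closed (Submodule.mul_mem_mul hf hg)

end LaurentExpansions

section SummationOverPoles

open SummationFilter
open scoped LaurentSeries

lemma expandAt_smul {K : Type*} [Field K] (x y : K) (f : RatFunc K) :
    expandAt x (y • f) = y • expandAt x f := by
  rw [RatFunc.smul_eq_C_mul, map_mul, expandAt_C, HahnSeries.C_mul_eq_smul]

lemma finite_setOf_coeff_neg_two_mul_ne_zero {R : Type*} [Zero R] (f : HahnSeries ℤ R) :
    {j : ℕ | f.coeff (-(2 * j)) ≠ 0}.Finite := by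
  refine (Set.finite_Iic (-f.order).toNat).subset fun j hj ↦ ?_
  have := HahnSeries.order_le_of_coeff_ne_zero hj
  simp only [Set.mem_Iic]
  omega

/-- The pairing `∑ j, 2 ζ(2j) f₋₂ⱼ` of a Laurent series `f = ∑ fₙ Xⁿ` with the even zeta values,
that is, the residue at `0` of `-π cot (π X) f`. Note the term `2 ζ(0) f₀ = -f₀`. -/
noncomputable def zetaPairing : ℂ⸨X⸩ →ₗ[ℂ] ℂ where
  toFun f := ∑ᶠ j : ℕ, 2 * riemannZeta (2 * j) * f.coeff (-(2 * j))
  map_add' f g := by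
    rw [← finsum_add_distrib]
    · simp [mul_add]
    · exact (finite_setOf_coeff_neg_two_mul_ne_zero f).subset fun j hj ↦ right_ne_zero_of_mul hj
    · exact (finite_setOf_coeff_neg_two_mul_ne_zero g).subset fun j hj ↦ right_ne_zero_of_mul hj
  map_smul' z f := by
    rw [RingHom.id_apply, smul_finsum]
    simp [mul_left_comm]

lemma zetaPairing_single_mul_ofPowerSeries (p : ℕ) (φ : PowerSeries ℂ) :
    zetaPairing (HahnSeries.single (-(p : ℤ)) 1 * HahnSeries.ofPowerSeries ℤ ℂ φ) =
      ∑ j ∈ range (p / 2 + 1),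
        2 * riemannZeta (2 * j) * PowerSeries.coeff (p - 2 * j) φ := by
  have coeff_eq (j : ℕ) :
      (HahnSeries.single (-(p : ℤ)) 1 * HahnSeries.ofPowerSeries ℤ ℂ φ).coeff (-(2 * j)) =
        if j ∈ range (p / 2 + 1) then PowerSeries.coeff (p - 2 * j) φ else 0 := by
    rw [HahnSeries.coeff_single_mul, one_mul, PowerSeries.coeff_coe]
    split_ifs with h₁ h₂ h₂ <;> grind
  change ∑ᶠ j : ℕ, _ = _
  simp only [coeff_eq, mul_ite, mul_zero]
  rw [finsum_eq_sum_of_support_subset (s := range (p / 2 + 1)) _ (by intro; simp +contextual)]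
  exact sum_congr rfl fun j hj ↦ if_pos hj

lemma zetaPairing_single {k : ℕ} (hk : 0 < k) :
    zetaPairing (HahnSeries.single (-(k : ℤ)) 1) =
      if Even k then 2 * riemannZeta k else 0 := by
  have h := zetaPairing_single_mul_ofPowerSeries k 1
  rw [map_one (HahnSeries.ofPowerSeries ℤ ℂ), mul_one] at h
  simp only [h, PowerSeries.coeff_one]
  split_ifs with he
  · obtain ⟨i, rfl⟩ := he.two_dvd
    rw [sum_eq_single_of_mem i (by simp)]
    · simp
    · intro j hj hji
      rw [if_neg (by grind), mul_zero]
  · exact sum_eq_zero fun j hj ↦ by rw [if_neg (by grind), mul_zero]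

lemma zetaPairing_ofPowerSeries (φ : PowerSeries ℂ) :
    zetaPairing (HahnSeries.ofPowerSeries ℤ ℂ φ) = -PowerSeries.constantCoeff φ := by
  have two_mul_zeta_zero : 2 * riemannZeta 0 = -1 := by
    rw [riemannZeta_zero]
    norm_num
  simpa [two_mul_zeta_zero] using zetaPairing_single_mul_ofPowerSeries 0 φ

/-- This is the residue theorem for `π cot (π z) f z`: the coefficient `(expandAt l f).coeff 0` is
the value of `f` at `l ∉ S`. By linearity it suffices to check it on partial fractions. -/
theorem hasSum_coeff_zero_expandAt (S : Finset ℤ) {f : RatFunc ℂ}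
    (hf : f ∈ poleSpan ((↑) '' (S : Set ℤ))) :
    HasSum (fun l : ℤ ↦ if l ∈ S then 0 else (expandAt (l : ℂ) f).coeff 0)
      (∑ r ∈ S, zetaPairing (expandAt (r : ℂ) f)) (symmetricIcc ℤ) := by
  induction hf using Submodule.span_induction with
  | zero => simp [hasSum_zero]
  | add f g _ _ hf hg =>
    simp only [map_add, sum_add_distrib]
    exact (hf.add hg).congr_fun fun l ↦ by split_ifs <;> simp
  | smul z f _ hf =>
    simp only [expandAt_smul, map_smul, ← smul_sum]
    exact (hf.const_smul z).congr_fun fun l ↦ by split_ifs <;> simp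
  | mem f hf =>
    obtain ⟨_, ⟨r, hr, rfl⟩, k, rfl⟩ := hf
    have pairing_eq : ∀ t ∈ S.erase r, zetaPairing (expandAt (t : ℂ) (pole (r : ℂ) ^ (k + 1))) =
        -(((t : ℂ) - r) ^ (k + 1))⁻¹ := by
      intro t ht
      rw [expandAt_pole_pow_of_ne (by exact_mod_cast ne_of_mem_erase ht),
        zetaPairing_ofPowerSeries, ← PowerSeries.coeff_zero_eq_constantCoeff_apply,
        coeff_invLinearPow]
      simp
    have total_eq : ∑ t ∈ S, zetaPairing (expandAt (t : ℂ) (pole (r : ℂ) ^ (k + 1))) =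
        (if Even (k + 1) then 2 * riemannZeta (k + 1 : ℕ) else 0) -
          ∑ t ∈ S, (((t : ℂ) - r) ^ (k + 1))⁻¹ := by
      rw [← add_sum_erase S _ hr, ← add_sum_erase S _ hr, sum_congr rfl pairing_eq,
        expandAt_pole_pow_self, zetaPairing_single k.succ_pos]
      simp [sub_eq_add_neg]
    simp only [coeff_zero_expandAt_pole_pow _ _ k.succ_pos, total_eq]
    exact hasSum_ite_mem_zero (hasSum_inv_sub_pow k.succ_pos r) S

end SummationOverPoles

section ThreePoles

open SummationFilter

lemma taylorKernel_comm {K : Type*} [Field K] (a c n : ℕ) (u w : K) :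
    taylorKernel a c n u w = taylorKernel c a n w u := by
  rw [taylorKernel, ← Finset.Nat.sum_antidiagonal_swap, taylorKernel]
  exact sum_congr rfl fun i _ ↦ by simp only [Prod.fst_swap, Prod.snd_swap]; ring

lemma inv_neg_pow {K : Type*} [Field K] (u : K) (k : ℕ) :
    ((-u) ^ k)⁻¹ = (-1) ^ k * (u ^ k)⁻¹ := by
  rw [neg_pow, mul_inv, ← inv_pow, inv_neg_one]

lemma taylorKernel_neg_neg {K : Type*} [Field K] (a c n : ℕ) (u w : K) :
    taylorKernel a c n (-u) (-w) = (-1) ^ (a + c + n) * taylorKernel a c n u w := by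
  rw [taylorKernel, taylorKernel, mul_sum]
  refine sum_congr rfl fun i hi ↦ ?_
  rw [inv_neg_pow, inv_neg_pow, ← mem_antidiagonal.mp hi]
  ring

lemma neg_one_pow_sub_two_mul {p j : ℕ} (hj : j ∈ range (p / 2 + 1)) :
    (-1 : ℂ) ^ (p - 2 * j) = (-1) ^ p := by
  have h : p - 2 * j + 2 * j = p := Nat.sub_add_cancel (by grind)
  conv_rhs => rw [← h, pow_add, pow_mul, neg_one_sq, one_pow, mul_one]

/-- The rational function `1 / (X ^ p * (X + m) ^ a * (X + m + n) ^ c)`. -/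
noncomputable def threePoles (p a c : ℕ) (m n : ℂ) : RatFunc ℂ :=
  pole 0 ^ p * pole (-m) ^ a * pole (-(m + n)) ^ c

lemma zetaPairing_expandAt_zero {m n : ℂ} (hm : m ≠ 0) (hmn : m + n ≠ 0) (p a c : ℕ) :
    zetaPairing (expandAt 0 (threePoles p a c m n)) =
      2 * (-1) ^ p * ∑ j ∈ range (p / 2 + 1),
        riemannZeta (2 * j) * taylorKernel a c (p - 2 * j) m (m + n) := by
  rw [threePoles, map_mul (expandAt _), map_mul (expandAt _), expandAt_pole_pow_self,
    expandAt_pole_pow_of_ne (neg_ne_zero.mpr hm).symm,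
    expandAt_pole_pow_of_ne (neg_ne_zero.mpr hmn).symm, mul_assoc,
    ← map_mul (HahnSeries.ofPowerSeries ℤ ℂ), zetaPairing_single_mul_ofPowerSeries, mul_sum]
  refine sum_congr rfl fun j hj ↦ ?_
  rw [coeff_invLinearPow_mul_invLinearPow, neg_one_pow_sub_two_mul hj, zero_sub, zero_sub,
    neg_neg, neg_neg]
  ring

lemma zetaPairing_expandAt_neg_add {m n : ℂ} (hn : n ≠ 0) (hmn : m + n ≠ 0) (p a c : ℕ) :
    zetaPairing (expandAt (-(m + n)) (threePoles p a c m n)) =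
      2 * (-1) ^ (p + a) * ∑ j ∈ range (c / 2 + 1),
        riemannZeta (2 * j) * taylorKernel a p (c - 2 * j) n (m + n) := by
  have hm : -(m + n) ≠ -m := by simpa using hn
  rw [threePoles, map_mul (expandAt _), map_mul (expandAt _), expandAt_pole_pow_self,
    expandAt_pole_pow_of_ne (neg_ne_zero.mpr hmn), expandAt_pole_pow_of_ne hm, mul_comm,
    ← map_mul (HahnSeries.ofPowerSeries ℤ ℂ), zetaPairing_single_mul_ofPowerSeries, mul_sum]
  refine sum_congr rfl fun j _ ↦ ?_
  rw [coeff_invLinearPow_mul_invLinearPow, sub_zero, show -(m + n) - -m = -n by ring,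
    taylorKernel_neg_neg, taylorKernel_comm, ← mul_assoc ((-1) ^ (c - 2 * j)), ← pow_add,
    show c - 2 * j + (p + a + (c - 2 * j)) = p + a + 2 * (c - 2 * j) by ring, pow_add,
    pow_mul _ 2, neg_one_sq, one_pow]
  ring

lemma zetaPairing_expandAt_neg {m n : ℂ} (hm : m ≠ 0) (hn : n ≠ 0) (hmn : m + n ≠ 0)
    {p c : ℕ} (hp : 0 < p) (hc : 0 < c) (a : ℕ) :
    zetaPairing (expandAt (-m) (threePoles p a c m n)) =
      2 * (-1) ^ p * (∑ j ∈ range (a / 2 + 1),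
        riemannZeta (2 * j) * taylorKernel (a - 2 * j + 1) c (p - 1) m (m + n)) +
      2 * (-1) ^ (p + a) * ∑ j ∈ range (a / 2 + 1),
        riemannZeta (2 * j) * taylorKernel (a - 2 * j + 1) p (c - 1) n (m + n) := by
  have hN : -m ≠ -(m + n) := by simpa using hn
  rw [threePoles, map_mul (expandAt _), map_mul (expandAt _), expandAt_pole_pow_self,
    expandAt_pole_pow_of_ne (neg_ne_zero.mpr hm), expandAt_pole_pow_of_ne hN, mul_right_comm,
    mul_comm, ← map_mul (HahnSeries.ofPowerSeries ℤ ℂ), zetaPairing_single_mul_ofPowerSeries,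
    mul_sum, mul_sum, ← sum_add_distrib]
  refine sum_congr rfl fun j hj ↦ ?_
  rw [sub_zero, show -m - -(m + n) = n by ring,
    coeff_invLinearPow_neg_mul_invLinearPow hm hn hmn hp hc, neg_one_pow_sub_two_mul hj]
  ring

/-- The value, in terms of even zeta values, of the sum over the integers `l` of
`1 / (l ^ p * (l + m) ^ a * (l + m + n) ^ c)`, see `hasSum_symmetricIcc_fibreSum`. -/
noncomputable def fibreSum (p a c : ℕ) (m n : ℂ) : ℂ :=
  2 * (-1) ^ p * ∑ j ∈ range (p / 2 + 1),
    riemannZeta (2 * j) * taylorKernel a c (p - 2 * j) m (m + n) +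
  2 * (-1) ^ (p + a) * ∑ j ∈ range (c / 2 + 1),
    riemannZeta (2 * j) * taylorKernel a p (c - 2 * j) n (m + n) +
  2 * (-1) ^ p * ∑ j ∈ range (a / 2 + 1),
    riemannZeta (2 * j) * taylorKernel (a - 2 * j + 1) c (p - 1) m (m + n) +
  2 * (-1) ^ (p + a) * ∑ j ∈ range (a / 2 + 1),
    riemannZeta (2 * j) * taylorKernel (a - 2 * j + 1) p (c - 1) n (m + n)

lemma coeff_zero_expandAt_threePoles {m n l : ℂ} (h₀ : l ≠ 0) (h₁ : l ≠ -m)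
    (h₂ : l ≠ -(m + n)) (p a c : ℕ) :
    (expandAt l (threePoles p a c m n)).coeff 0 =
      (l ^ p * (l + m) ^ a * (l + m + n) ^ c)⁻¹ := by
  rw [threePoles, map_mul, map_mul, expandAt_pole_pow_of_ne h₀, expandAt_pole_pow_of_ne h₁,
    expandAt_pole_pow_of_ne h₂, ← map_mul, ← map_mul, PowerSeries.coeff_coe,
    if_neg (lt_irrefl 0), Int.natAbs_zero]
  simp [-neg_add_rev, PowerSeries.coeff_mul, coeff_invLinearPow, add_assoc, mul_comm,
    mul_left_comm]

theorem hasSum_symmetricIcc_fibreSum {m n : ℤ} (hm : m ≠ 0) (hn : n ≠ 0) (hmn : m + n ≠ 0)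
    {p a c : ℕ} (hp : 0 < p) (ha : 0 < a) (hc : 0 < c) :
    HasSum (fun l : ℤ ↦ ((l : ℂ) ^ p * (l + m) ^ a * (l + m + n) ^ c)⁻¹)
      (fibreSum p a c m n) (symmetricIcc ℤ) := by
  set S : Finset ℤ := {0, -m, -(m + n)} with hS
  have mem_span : threePoles p a c m n ∈ poleSpan ((↑) '' (S : Set ℤ)) := by
    refine mul_mem_poleSpan (mul_mem_poleSpan (pole_pow_mem_poleSpan ?_ hp)
      (pole_pow_mem_poleSpan ?_ ha)) (pole_pow_mem_poleSpan ?_ hc)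
    exacts [⟨0, by simp [hS]⟩, ⟨-m, by simp [hS]⟩, ⟨-(m + n), by simp [hS]⟩]
  have hm' : (m : ℂ) ≠ 0 := by exact_mod_cast hm
  have hn' : (n : ℂ) ≠ 0 := by exact_mod_cast hn
  have hmn' : (m : ℂ) + n ≠ 0 := by exact_mod_cast hmn
  have value : ∑ r ∈ S, zetaPairing (expandAt (r : ℂ) (threePoles p a c m n)) =
      fibreSum p a c m n := by
    rw [hS, sum_insert (by simp; omega), sum_insert (by simp; omega), sum_singleton]
    push_cast
    rw [zetaPairing_expandAt_zero hm' hmn', zetaPairing_expandAt_neg hm' hn' hmn' hp hc,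
      zetaPairing_expandAt_neg_add hn' hmn', fibreSum]
    ring
  rw [← value]
  refine (hasSum_coeff_zero_expandAt S mem_span).congr_fun fun l ↦ ?_
  split_ifs with hl
  · rcases (by simpa [hS] using hl : l = 0 ∨ l = -m ∨ l = -(m + n)) with rfl | rfl | rfl
    · simp [hp.ne']
    · simp [ha.ne']
    · push_cast
      simp [add_assoc, hc.ne']
  · obtain ⟨h₀, h₁, h₂⟩ : l ≠ 0 ∧ l ≠ -m ∧ l ≠ -(m + n) := by simpa [hS] using hl
    exact (coeff_zero_expandAt_threePoles (by exact_mod_cast h₀) (by exact_mod_cast h₁)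
      (by exact_mod_cast h₂) p a c).symm

end ThreePoles

section TornheimSums

/-- The summand of `T q s b 1 1`; the terms omitted there vanish here since `0⁻¹ = 0`. -/
noncomputable def tornheimTerm (q : ℕ) (s : ℂ) (b : ℕ) (x : ℤ × ℕ) : ℂ :=
  ((x.1 : ℂ) ^ q)⁻¹ * (((x.2 + 1 : ℕ) : ℂ) ^ s)⁻¹ * (((x.1 : ℂ) + (x.2 + 1 : ℕ)) ^ b)⁻¹

lemma tornheimTerm_mul_inv_fst_pow (q : ℕ) (s : ℂ) (b i k : ℕ) (x : ℤ × ℕ) :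
    tornheimTerm q s b x * (((x.1 : ℂ) ^ i)⁻¹ * (((x.1 : ℂ) + (x.2 + 1 : ℕ)) ^ k)⁻¹) =
      tornheimTerm (q + i) s (b + k) x := by
  rw [tornheimTerm, tornheimTerm, pow_add, pow_add, mul_inv, mul_inv]
  ring

lemma tornheimTerm_mul_inv_snd_pow (q : ℕ) (s : ℂ) (b i k : ℕ) (x : ℤ × ℕ) :
    tornheimTerm q s b x * ((((x.2 + 1 : ℕ) : ℂ) ^ i)⁻¹ * (((x.1 : ℂ) + (x.2 + 1 : ℕ)) ^ k)⁻¹) =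
      tornheimTerm q (s + i) (b + k) x := by
  rw [tornheimTerm, tornheimTerm, cpow_add _ _ (by norm_cast), cpow_natCast, pow_add, mul_inv,
    mul_inv]
  ring

lemma tornheimTerm_eq_zero {q b : ℕ} (hq : 0 < q) (hb : 0 < b) (s : ℂ) {x : ℤ × ℕ}
    (hx : x.1 = 0 ∨ x.1 + (x.2 + 1 : ℕ) = 0) : tornheimTerm q s b x = 0 := by
  rcases hx with h | h
  · simp [tornheimTerm, h, hq.ne']
  · have : (x.1 : ℂ) + (x.2 + 1 : ℕ) = 0 := by exact_mod_cast h
    rw [tornheimTerm, this, zero_pow hb.ne', inv_zero, mul_zero]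

lemma norm_inv_intCast_pow_le (m : ℤ) {k : ℕ} (hk : 0 < k) :
    ‖((m : ℂ) ^ k)⁻¹‖ ≤ |(m : ℝ)|⁻¹ := by
  rcases eq_or_ne m 0 with rfl | hm
  · simp [hk.ne']
  have one_le : (1 : ℝ) ≤ |(m : ℝ)| := by exact_mod_cast Int.one_le_abs hm
  rw [norm_inv, norm_pow, norm_intCast]
  exact inv_anti₀ (by positivity) (le_self_pow₀ one_le hk.ne')

lemma norm_tornheimTerm_le {q b : ℕ} (hq : 0 < q) (hb : 0 < b) (s : ℂ) (x : ℤ × ℕ) :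
    ‖tornheimTerm q s b x‖ ≤ ((x.1 : ℝ) ^ 2)⁻¹ * (((x.2 + 1 : ℕ) : ℝ) ^ s.re)⁻¹ +
      (((x.1 + (x.2 + 1 : ℕ) : ℤ) : ℝ) ^ 2)⁻¹ * (((x.2 + 1 : ℕ) : ℝ) ^ s.re)⁻¹ := by
  set u : ℝ := |(x.1 : ℝ)|⁻¹ with hu
  set w : ℝ := |((x.1 + (x.2 + 1 : ℕ) : ℤ) : ℝ)|⁻¹ with hw
  have amgm : u * w ≤ u ^ 2 + w ^ 2 := by nlinarith [sq_nonneg (u - w), sq_nonneg (u + w)]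
  have hcast : (x.1 : ℂ) + (x.2 + 1 : ℕ) = ((x.1 + (x.2 + 1 : ℕ) : ℤ) : ℂ) := by push_cast; rfl
  calc ‖tornheimTerm q s b x‖ ≤ u * (((x.2 + 1 : ℕ) : ℝ) ^ s.re)⁻¹ * w := by
        rw [tornheimTerm, hcast, norm_mul, norm_mul, norm_inv (_ ^ s),
          norm_natCast_cpow_of_pos x.2.succ_pos]
        gcongr
        exacts [norm_inv_intCast_pow_le _ hq, norm_inv_intCast_pow_le _ hb]
    _ = u * w * (((x.2 + 1 : ℕ) : ℝ) ^ s.re)⁻¹ := by ring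
    _ ≤ (u ^ 2 + w ^ 2) * (((x.2 + 1 : ℕ) : ℝ) ^ s.re)⁻¹ := by gcongr
    _ = _ := by rw [hu, hw, inv_pow, inv_pow, sq_abs, sq_abs, add_mul]

lemma summable_tornheimTerm {q b : ℕ} (hq : 0 < q) (hb : 0 < b) {s : ℂ} (hs : 1 < s.re) :
    Summable (tornheimTerm q s b) := by
  have summable_fst : Summable fun m : ℤ ↦ ((m : ℝ) ^ 2)⁻¹ := by
    simpa using Real.summable_one_div_int_pow (p := 2).2 one_lt_two
  have summable_snd : Summable fun n : ℕ ↦ (((n + 1 : ℕ) : ℝ) ^ s.re)⁻¹ :=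
    (summable_nat_add_iff 1).2 (Real.summable_nat_rpow_inv.2 hs)
  have summable_prod : Summable fun x : ℤ × ℕ ↦
      ((x.1 : ℝ) ^ 2)⁻¹ * (((x.2 + 1 : ℕ) : ℝ) ^ s.re)⁻¹ :=
    summable_fst.mul_of_nonneg summable_snd (fun _ ↦ by positivity) (fun _ ↦ by positivity)
  have shear_injective :
      Function.Injective fun x : ℤ × ℕ ↦ (x.1 + (x.2 + 1 : ℕ), x.2) := by
    rintro ⟨_, _⟩ ⟨_, _⟩ h
    grind
  exact .of_norm_bounded (summable_prod.add (summable_prod.comp_injective shear_injective))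
    (norm_tornheimTerm_le hq hb s)

lemma hasSum_tornheimTerm {q b : ℕ} (hq : 0 < q) (hb : 0 < b) {s : ℂ} (hs : 1 < s.re) :
    HasSum (tornheimTerm q s b) (T q s b 1 1) := by
  convert (summable_tornheimTerm hq hb hs).hasSum using 1
  refine tsum_congr fun x ↦ ?_
  split_ifs with hx
  · simp [tornheimTerm, mul_comm, add_assoc]
  · rw [tornheimTerm_eq_zero hq hb s (by push_cast; tauto)]

/-- The combination of the `U i k` in which `u ^ (-i) * w ^ (-k)` is replaced by `U i k` in
`taylorKernel a c n u w`. -/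
def taylorSum (U : ℕ → ℕ → ℂ) (a c n : ℕ) : ℂ :=
  ∑ i ∈ antidiagonal n,
    (a.multichoose i.1 : ℂ) * (c.multichoose i.2 : ℂ) * U (a + i.1) (c + i.2)

lemma hasSum_mul_taylorKernel {ι : Type*} {f u w : ι → ℂ} {U : ℕ → ℕ → ℂ}
    (h : ∀ i k, HasSum (fun x ↦ f x * ((u x ^ i)⁻¹ * (w x ^ k)⁻¹)) (U i k)) (a c n : ℕ) :
    HasSum (fun x ↦ f x * taylorKernel a c n (u x) (w x)) (taylorSum U a c n) := by
  refine (hasSum_sum fun i _ ↦ (h (a + i.1) (c + i.2)).mul_left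
    ((a.multichoose i.1 : ℂ) * (c.multichoose i.2 : ℂ))).congr_fun fun x ↦ ?_
  rw [taylorKernel, mul_sum]
  exact sum_congr rfl fun i _ ↦ mul_left_comm _ _ _

lemma hasSum_mul_sum_taylorKernel {ι : Type*} {f u w : ι → ℂ} {U : ℕ → ℕ → ℂ}
    (h : ∀ i k, HasSum (fun x ↦ f x * ((u x ^ i)⁻¹ * (w x ^ k)⁻¹)) (U i k))
    (t : Finset ℕ) (z : ℂ) (g : ℕ → ℂ) (a n : ℕ → ℕ) (c : ℕ) :
    HasSum (fun x ↦ f x * (z * ∑ j ∈ t, g j * taylorKernel (a j) c (n j) (u x) (w x)))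
      (z * ∑ j ∈ t, g j * taylorSum U (a j) c (n j)) := by
  refine ((hasSum_sum fun j _ ↦ (hasSum_mul_taylorKernel h (a j) c (n j)).mul_left
    (g j)).mul_left z).congr_fun fun x ↦ ?_
  rw [mul_left_comm, mul_sum]
  exact congrArg _ (sum_congr rfl fun j _ ↦ mul_left_comm _ _ _)

lemma multichoose_eq_choose_sub_one {c : ℕ} (hc : 0 < c) (k : ℕ) :
    c.multichoose k = (c + k - 1).choose (c - 1) := by
  rw [Nat.multichoose_eq, show c + k - 1 = c - 1 + k by omega, Nat.choose_symm_add]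

lemma taylorSum_eq_sum_range (U : ℕ → ℕ → ℂ) (a : ℕ) {c : ℕ} (hc : 0 < c) (n : ℕ) :
    taylorSum U a c n = ∑ ω ∈ range (n + 1), ((ω + a - 1).choose ω : ℂ) *
      ((c + n - ω - 1).choose (c - 1) : ℂ) * U (a + ω) (c + n - ω) := by
  rw [taylorSum, Finset.Nat.sum_antidiagonal_eq_sum_range_succ_mk]
  refine sum_congr rfl fun ω hω ↦ ?_
  rw [mem_range] at hω
  rw [multichoose_eq_choose_sub_one hc, Nat.multichoose_eq, add_comm ω a,
    Nat.add_sub_assoc (by omega : ω ≤ n)]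

lemma J0_eq_sum_taylorSum {p a c : ℕ} (hp : 0 < p) (hc : 0 < c) (q b : ℕ) (s : ℂ) :
    J0 p q a b c s =
      2 * (-1) ^ p * ∑ j ∈ range (p / 2 + 1), riemannZeta (2 * j) *
        taylorSum (fun i k ↦ T (q + i) s (b + k) 1 1) a c (p - 2 * j) +
      2 * (-1) ^ (p + a) * ∑ j ∈ range (c / 2 + 1), riemannZeta (2 * j) *
        taylorSum (fun i k ↦ T q (s + i) (b + k) 1 1) a p (c - 2 * j) +
      2 * (-1) ^ p * ∑ j ∈ range (a / 2 + 1), riemannZeta (2 * j) *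
        taylorSum (fun i k ↦ T (q + i) s (b + k) 1 1) (a - 2 * j + 1) c (p - 1) +
      2 * (-1) ^ (p + a) * ∑ j ∈ range (a / 2 + 1), riemannZeta (2 * j) *
        taylorSum (fun i k ↦ T q (s + i) (b + k) 1 1) (a - 2 * j + 1) p (c - 1) := by
  simp only [taylorSum_eq_sum_range _ _ hp, taylorSum_eq_sum_range _ _ hc, J0,
    Nat.sub_add_cancel hp, Nat.sub_add_cancel hc]
  refine congrArg₂ (· + ·) (congrArg₂ (· + ·) (congrArg₂ (· + ·) ?_ ?_) ?_) ?_
  all_goals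
    refine congrArg (_ * ·) (sum_congr rfl fun j hj ↦
      congrArg (_ * ·) (sum_congr rfl fun ω hω ↦ ?_))
    rw [mem_range] at hj hω
    beta_reduce
  · rw [show p + c - 2 * j - ω = c + (p - 2 * j) - ω by omega,
      show p + b + c - 2 * j - ω = b + (c + (p - 2 * j) - ω) by omega, add_assoc q]
  · rw [show p + c - 2 * j - ω = p + (c - 2 * j) - ω by omega,
      show p + b + c - 2 * j - ω = b + (p + (c - 2 * j) - ω) by omega, add_assoc s, Nat.cast_add]
  · rw [show ω + a - 2 * j = ω + (a - 2 * j + 1) - 1 by omega,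
      show p + c - 2 - ω = c + (p - 1) - ω - 1 by omega,
      show q + a - 2 * j + ω + 1 = q + (a - 2 * j + 1 + ω) by omega,
      show p + b + c - 1 - ω = b + (c + (p - 1) - ω) by omega]
  · rw [show ω + a - 2 * j = ω + (a - 2 * j + 1) - 1 by omega,
      show p + c - 2 - ω = p + (c - 1) - ω - 1 by omega,
      show s + ((a - 2 * j : ℕ) : ℂ) + ω + 1 = s + ((a - 2 * j + 1 + ω : ℕ) : ℂ) by
        rw [Nat.cast_add, Nat.cast_add_one]; ring,
      show p + b + c - 1 - ω = b + (p + (c - 1) - ω) by omega]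

lemma hasSum_tornheimTerm_mul_fibreSum {p q a b c : ℕ} (hp : 0 < p) (hq : 0 < q) (hb : 0 < b)
    (hc : 0 < c) {s : ℂ} (hs : 1 < s.re) :
    HasSum (fun x : ℤ × ℕ ↦ tornheimTerm q s b x * fibreSum p a c x.1 (x.2 + 1 : ℕ))
      (J0 p q a b c s) := by
  have hasSum_fst (i k : ℕ) : HasSum (fun x : ℤ × ℕ ↦ tornheimTerm q s b x *
      (((x.1 : ℂ) ^ i)⁻¹ * (((x.1 : ℂ) + (x.2 + 1 : ℕ)) ^ k)⁻¹)) (T (q + i) s (b + k) 1 1) :=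
    (hasSum_tornheimTerm (by omega) (by omega) hs).congr_fun
      fun x ↦ tornheimTerm_mul_inv_fst_pow q s b i k x
  have hasSum_snd (i k : ℕ) : HasSum (fun x : ℤ × ℕ ↦ tornheimTerm q s b x *
      ((((x.2 + 1 : ℕ) : ℂ) ^ i)⁻¹ * (((x.1 : ℂ) + (x.2 + 1 : ℕ)) ^ k)⁻¹))
      (T q (s + i) (b + k) 1 1) :=
    (hasSum_tornheimTerm hq (by omega)
      (by simpa using lt_add_of_lt_of_nonneg hs i.cast_nonneg)).congr_fun
      fun x ↦ tornheimTerm_mul_inv_snd_pow q s b i k x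
  rw [J0_eq_sum_taylorSum hp hc]
  simp only [fibreSum, mul_add]
  refine ((HasSum.add ?_ ?_).add ?_).add ?_
  exacts [hasSum_mul_sum_taylorKernel hasSum_fst _ _ _ _ _ _,
    hasSum_mul_sum_taylorKernel hasSum_snd _ _ _ _ _ _,
    hasSum_mul_sum_taylorKernel hasSum_fst _ _ _ _ _ _,
    hasSum_mul_sum_taylorKernel hasSum_snd _ _ _ _ _ _]

end TornheimSums

section ZetaA3

/-- The summand of `ZA3 s₁ s₂ s₃ s₄ s₅ s₆`. -/
noncomputable def zetaA3Term (s₁ s₂ s₃ s₄ s₅ s₆ : ℂ) (t : ℕ × ℕ × ℕ) : ℂ :=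
  (((t.1 + 1 : ℕ) : ℂ) ^ s₁ * ((t.2.1 + 1 : ℕ) : ℂ) ^ s₂ * ((t.2.2 + 1 : ℕ) : ℂ) ^ s₃ *
    ((t.1 + 1 + (t.2.1 + 1) : ℕ) : ℂ) ^ s₄ * ((t.2.1 + 1 + (t.2.2 + 1) : ℕ) : ℂ) ^ s₅ *
    ((t.1 + 1 + (t.2.1 + 1) + (t.2.2 + 1) : ℕ) : ℂ) ^ s₆)⁻¹

lemma natCast_le_norm_natCast_cpow {k n : ℕ} (hk : 0 < k) (hkn : k ≤ n) {s : ℂ}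
    (hs : 1 ≤ s.re) : (k : ℝ) ≤ ‖(n : ℂ) ^ s‖ := by
  rw [norm_natCast_cpow_of_pos (hk.trans_le hkn)]
  calc (k : ℝ) ≤ n := by exact_mod_cast hkn
    _ = (n : ℝ) ^ (1 : ℝ) := (Real.rpow_one _).symm
    _ ≤ (n : ℝ) ^ s.re := Real.rpow_le_rpow_of_exponent_le (by exact_mod_cast hk.trans_le hkn) hs

lemma norm_zetaA3Term_le {s₁ s₂ s₃ s₄ s₅ s₆ : ℂ} (h₁ : 1 ≤ s₁.re) (h₂ : 1 ≤ s₂.re)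
    (h₃ : 1 ≤ s₃.re) (h₄ : 1 ≤ s₄.re) (h₅ : 1 ≤ s₅.re) (h₆ : 1 ≤ s₆.re) (t : ℕ × ℕ × ℕ) :
    ‖zetaA3Term s₁ s₂ s₃ s₄ s₅ s₆ t‖ ≤ (((t.1 + 1 : ℕ) : ℝ) ^ 2)⁻¹ *
      ((((t.2.1 + 1 : ℕ) : ℝ) ^ 2)⁻¹ * (((t.2.2 + 1 : ℕ) : ℝ) ^ 2)⁻¹) := by
  rw [zetaA3Term, norm_inv, ← mul_inv, ← mul_inv]
  refine inv_anti₀ (by positivity) ?_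
  simp only [norm_mul]
  calc ((t.1 + 1 : ℕ) : ℝ) ^ 2 * (((t.2.1 + 1 : ℕ) : ℝ) ^ 2 * ((t.2.2 + 1 : ℕ) : ℝ) ^ 2)
      = ((t.1 + 1 : ℕ) : ℝ) * ((t.2.1 + 1 : ℕ) : ℝ) * ((t.2.2 + 1 : ℕ) : ℝ) *
        ((t.1 + 1 : ℕ) : ℝ) * ((t.2.1 + 1 : ℕ) : ℝ) * ((t.2.2 + 1 : ℕ) : ℝ) := by ring
    _ ≤ _ := by
      gcongr <;> exact natCast_le_norm_natCast_cpow (by omega) (by omega) ‹_›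

lemma hasSum_zetaA3Term {s₁ s₂ s₃ s₄ s₅ s₆ : ℂ} (h₁ : 1 ≤ s₁.re) (h₂ : 1 ≤ s₂.re)
    (h₃ : 1 ≤ s₃.re) (h₄ : 1 ≤ s₄.re) (h₅ : 1 ≤ s₅.re) (h₆ : 1 ≤ s₆.re) :
    HasSum (zetaA3Term s₁ s₂ s₃ s₄ s₅ s₆) (ZA3 s₁ s₂ s₃ s₄ s₅ s₆) := by
  have summable_sq : Summable fun n : ℕ ↦ (((n + 1 : ℕ) : ℝ) ^ 2)⁻¹ :=
    (summable_nat_add_iff 1).2 (Real.summable_nat_pow_inv.2 one_lt_two)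
  have summable_prod : Summable fun t : ℕ × ℕ × ℕ ↦ (((t.1 + 1 : ℕ) : ℝ) ^ 2)⁻¹ *
      ((((t.2.1 + 1 : ℕ) : ℝ) ^ 2)⁻¹ * (((t.2.2 + 1 : ℕ) : ℝ) ^ 2)⁻¹) :=
    summable_sq.mul_of_nonneg
      (summable_sq.mul_of_nonneg summable_sq (fun _ ↦ by positivity) fun _ ↦ by positivity)
      (fun _ ↦ by positivity) fun _ ↦ by positivity
  have h := (Summable.of_norm_bounded summable_prod
    (norm_zetaA3Term_le h₁ h₂ h₃ h₄ h₅ h₆)).hasSum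
  simpa only [ZA3, Z3, one_div, zetaA3Term] using h

end ZetaA3

section Chambers

lemma hasSum_of_support_subset_iUnion_range {ι β γ α : Type*} [Fintype ι] [AddCommMonoid α]
    [TopologicalSpace α] [ContinuousAdd α] {φ : ι → β → γ} {g : γ → α} {a : ι → α}
    (hφ : Function.Injective (Function.uncurry φ))
    (hg : Function.support g ⊆ ⋃ i, Set.range (φ i)) (h : ∀ i, HasSum (fun x ↦ g (φ i x)) (a i)) :
    HasSum g (∑ i, a i) := by
  have inj (i : ι) : Function.Injective (φ i) := fun x y hxy ↦
    (Prod.ext_iff.mp (@hφ (i, x) (i, y) hxy)).2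
  have disjoint : ((univ : Finset ι) : Set ι).Pairwise
      (Function.onFun Disjoint fun i ↦ Set.range (φ i)) := by
    intro i _ j _ hij
    refine Set.disjoint_left.2 ?_
    rintro _ ⟨x, rfl⟩ ⟨y, hy⟩
    exact hij (Prod.ext_iff.mp (@hφ (j, y) (i, x) hy)).1.symm
  have := hasSum_sum_disjoint univ disjoint fun i _ ↦ (inj i).hasSum_range_iff.2 (h i)
  refine (hasSum_subtype_iff_of_support_subset ?_).1 this
  simpa using hg

/-- The four chambers of an integer `l` relative to `0`, `-m` and `-(m + n)`, for positive `m` and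
`n`: chamber `i` is the image of `chamberEmb i`. Here `((i, j), l)` stands for `m = i + 1` and
`n = j + 1`. -/
def chamberEmb : Fin 4 → ℕ × ℕ × ℕ → (ℕ × ℕ) × ℤ
  | 0, (x, y, z) => ((y, z), (x + 1 : ℕ))
  | 1, (x, y, z) => ((x + 1 + y, z), -(x + 1 : ℕ))
  | 2, (x, y, z) => ((x, y + 1 + z), -(x + 1 + (y + 1) : ℕ))
  | 3, (x, y, z) => ((x, y), -(x + 1 + (y + 1) + (z + 1) : ℕ))

lemma injective_chamberEmb : Function.Injective (Function.uncurry chamberEmb) := by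
  rintro ⟨i, x, y, z⟩ ⟨j, x', y', z'⟩ h
  fin_cases i <;> fin_cases j <;>
    simp only [Function.uncurry, chamberEmb, Prod.mk.injEq, Fin.ext_iff] at h ⊢ <;> grind

lemma mem_iUnion_range_chamberEmb {i j : ℕ} {l : ℤ} (h₀ : l ≠ 0) (h₁ : l + (i + 1) ≠ 0)
    (h₂ : l + (i + 1) + (j + 1) ≠ 0) : ((i, j), l) ∈ ⋃ k, Set.range (chamberEmb k) := by
  rw [Set.mem_iUnion]
  rcases h₀.lt_or_gt with h₀ | h₀
  · rcases h₁.lt_or_gt with h₁ | h₁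
    · rcases h₂.lt_or_gt with h₂ | h₂
      · refine ⟨3, (i, j, (-l - i - j - 3).toNat), ?_⟩
        grind [chamberEmb]
      · refine ⟨2, (i, (-l - i - 2).toNat, (l + i + j + 1).toNat), ?_⟩
        grind [chamberEmb]
    · refine ⟨1, ((-l - 1).toNat, (l + i).toNat, j), ?_⟩
      grind [chamberEmb]
  · refine ⟨0, ((l - 1).toNat, i, j), ?_⟩
    grind [chamberEmb]

/-- The summand `1 / (l ^ p * (l + m) ^ a * (l + m + n) ^ c * m ^ s₁ * n ^ s₂ * (m + n) ^ s₃)` as a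
function of `((m - 1, n - 1), l)`. -/
noncomputable def insertionTerm (p a c : ℕ) (s₁ s₂ s₃ : ℂ) (x : (ℕ × ℕ) × ℤ) : ℂ :=
  ((x.2 : ℂ) ^ p * (x.2 + (x.1.1 + 1 : ℕ)) ^ a * (x.2 + (x.1.1 + 1 : ℕ) + (x.1.2 + 1 : ℕ)) ^ c)⁻¹ *
    (((x.1.1 + 1 : ℕ) : ℂ) ^ s₁ * ((x.1.2 + 1 : ℕ) : ℂ) ^ s₂ *
      ((x.1.1 + 1 + (x.1.2 + 1) : ℕ) : ℂ) ^ s₃)⁻¹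

lemma insertionTerm_chamberEmb_zero (p a c : ℕ) (s₁ s₂ s₃ : ℂ) (t : ℕ × ℕ × ℕ) :
    insertionTerm p a c s₁ s₂ s₃ (chamberEmb 0 t) = zetaA3Term p s₁ s₂ a s₃ c t := by
  obtain ⟨x, y, z⟩ := t
  simp only [insertionTerm, chamberEmb, zetaA3Term, cpow_natCast]
  push_cast
  rw [← mul_inv]
  ring_nf

lemma insertionTerm_chamberEmb_one (p a c : ℕ) (s₁ s₂ s₃ : ℂ) (t : ℕ × ℕ × ℕ) :
    insertionTerm p a c s₁ s₂ s₃ (chamberEmb 1 t) =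
      (-1) ^ p * zetaA3Term p a s₂ s₁ c s₃ t := by
  obtain ⟨x, y, z⟩ := t
  have h₀ : ((-(x + 1 : ℕ) : ℤ) : ℂ) = -((x + 1 : ℕ) : ℂ) := by push_cast; ring
  have h₁ : -((x + 1 : ℕ) : ℂ) + (x + 1 + y + 1 : ℕ) = (y + 1 : ℕ) := by push_cast; ring
  have h₂ : ((y + 1 : ℕ) : ℂ) + (z + 1 : ℕ) = (y + 1 + (z + 1) : ℕ) := by push_cast; ring
  simp only [insertionTerm, chamberEmb, zetaA3Term, cpow_natCast, h₀, h₁, h₂, mul_inv, inv_neg_pow]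
  simp only [add_assoc]
  ring

lemma insertionTerm_chamberEmb_two (p a c : ℕ) (s₁ s₂ s₃ : ℂ) (t : ℕ × ℕ × ℕ) :
    insertionTerm p a c s₁ s₂ s₃ (chamberEmb 2 t) =
      (-1) ^ (p + a) * zetaA3Term s₁ a c p s₂ s₃ t := by
  obtain ⟨x, y, z⟩ := t
  have h₀ : ((-(x + 1 + (y + 1) : ℕ) : ℤ) : ℂ) = -((x + 1 + (y + 1) : ℕ) : ℂ) := by
    push_cast; ring
  have h₁ : -((x + 1 + (y + 1) : ℕ) : ℂ) + (x + 1 : ℕ) = -((y + 1 : ℕ) : ℂ) := by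
    push_cast; ring
  have h₂ : -((y + 1 : ℕ) : ℂ) + (y + 1 + z + 1 : ℕ) = (z + 1 : ℕ) := by push_cast; ring
  simp only [insertionTerm, chamberEmb, zetaA3Term, cpow_natCast, h₀, h₁, h₂, mul_inv, inv_neg_pow]
  simp only [add_assoc]
  ring

lemma insertionTerm_chamberEmb_three (p a c : ℕ) (s₁ s₂ s₃ : ℂ) (t : ℕ × ℕ × ℕ) :
    insertionTerm p a c s₁ s₂ s₃ (chamberEmb 3 t) =
      (-1) ^ (p + a + c) * zetaA3Term s₁ s₂ c s₃ a p t := by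
  obtain ⟨x, y, z⟩ := t
  have h₀ : ((-(x + 1 + (y + 1) + (z + 1) : ℕ) : ℤ) : ℂ) =
      -((x + 1 + (y + 1) + (z + 1) : ℕ) : ℂ) := by push_cast; ring
  have h₁ : -((x + 1 + (y + 1) + (z + 1) : ℕ) : ℂ) + (x + 1 : ℕ) =
      -((y + 1 + (z + 1) : ℕ) : ℂ) := by push_cast; ring
  have h₂ : -((y + 1 + (z + 1) : ℕ) : ℂ) + (y + 1 : ℕ) = -((z + 1 : ℕ) : ℂ) := by
    push_cast; ring
  simp only [insertionTerm, chamberEmb, zetaA3Term, cpow_natCast, h₀, h₁, h₂, mul_inv, inv_neg_pow]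
  ring

lemma support_insertionTerm_subset {p a c : ℕ} (hp : 0 < p) (ha : 0 < a) (hc : 0 < c)
    (s₁ s₂ s₃ : ℂ) :
    Function.support (insertionTerm p a c s₁ s₂ s₃) ⊆ ⋃ k, Set.range (chamberEmb k) := by
  rintro ⟨⟨i, j⟩, l⟩ hx
  simp only [Function.mem_support, insertionTerm, ne_eq, mul_eq_zero, inv_eq_zero, not_or,
    pow_eq_zero_iff hp.ne', pow_eq_zero_iff ha.ne', pow_eq_zero_iff hc.ne'] at hx
  exact mem_iUnion_range_chamberEmb (by exact_mod_cast hx.1.1.1) (by exact_mod_cast hx.1.1.2)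
    (by exact_mod_cast hx.1.2)

lemma one_le_re_natCast {n : ℕ} (hn : 0 < n) : 1 ≤ (n : ℂ).re := by
  rw [natCast_re]
  exact Nat.one_le_cast.2 hn

lemma hasSum_insertionTerm {p a c : ℕ} (hp : 0 < p) (ha : 0 < a) (hc : 0 < c) {s₁ s₂ s₃ : ℂ}
    (h₁ : 1 ≤ s₁.re) (h₂ : 1 ≤ s₂.re) (h₃ : 1 ≤ s₃.re) :
    HasSum (insertionTerm p a c s₁ s₂ s₃)
      (ZA3 p s₁ s₂ a s₃ c + (-1) ^ p * ZA3 p a s₂ s₁ c s₃ + (-1) ^ (p + a) * ZA3 s₁ a c p s₂ s₃ +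
        (-1) ^ (p + a + c) * ZA3 s₁ s₂ c s₃ a p) := by
  have one_le_p := one_le_re_natCast hp
  have one_le_a := one_le_re_natCast ha
  have one_le_c := one_le_re_natCast hc
  have := hasSum_of_support_subset_iUnion_range injective_chamberEmb
    (support_insertionTerm_subset hp ha hc s₁ s₂ s₃)
    (a := ![ZA3 p s₁ s₂ a s₃ c, (-1) ^ p * ZA3 p a s₂ s₁ c s₃,
      (-1) ^ (p + a) * ZA3 s₁ a c p s₂ s₃, (-1) ^ (p + a + c) * ZA3 s₁ s₂ c s₃ a p]) fun i ↦ by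
    fin_cases i
    · exact (hasSum_zetaA3Term one_le_p h₁ h₂ one_le_a h₃ one_le_c).congr_fun
        (insertionTerm_chamberEmb_zero p a c s₁ s₂ s₃)
    · exact ((hasSum_zetaA3Term one_le_p one_le_a h₂ h₁ one_le_c h₃).mul_left _).congr_fun
        (insertionTerm_chamberEmb_one p a c s₁ s₂ s₃)
    · exact ((hasSum_zetaA3Term h₁ one_le_a one_le_c one_le_p h₂ h₃).mul_left _).congr_fun
        (insertionTerm_chamberEmb_two p a c s₁ s₂ s₃)
    · exact ((hasSum_zetaA3Term h₁ h₂ one_le_c h₃ one_le_a one_le_p).mul_left _).congr_fun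
        (insertionTerm_chamberEmb_three p a c s₁ s₂ s₃)
  rwa [Fin.sum_univ_four] at this

/-- The three ranges of a pair `m : ℤ`, `n ≥ 1` with `m ≠ 0` and `m + n ≠ 0`, namely `0 < m`,
`-n < m < 0` and `m < -n`, each with a third coordinate `l` shifted so that `l`, `l + m` and
`l + m + n` are permuted with those of `insertionTerm`. Here `((m, k), l)` stands for
`n = k + 1`. -/
def sectorEmb : Fin 3 → (ℕ × ℕ) × ℤ → (ℤ × ℕ) × ℤ
  | 0, ((i, j), l) => (((i + 1 : ℕ), j), l)
  | 1, ((i, j), l) => ((-(i + 1 : ℕ), i + 1 + j), l + (i + 1 : ℕ))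
  | 2, ((i, j), l) => ((-(i + 1 + (j + 1) : ℕ), i), l + (i + 1 + (j + 1) : ℕ))

lemma injective_sectorEmb : Function.Injective (Function.uncurry sectorEmb) := by
  rintro ⟨i, ⟨x, y⟩, l⟩ ⟨j, ⟨x', y'⟩, l'⟩ h
  fin_cases i <;> fin_cases j <;>
    simp only [Function.uncurry, sectorEmb, Prod.mk.injEq, Fin.ext_iff] at h ⊢ <;> grind

lemma mem_iUnion_range_sectorEmb {m l : ℤ} {k : ℕ} (h₀ : m ≠ 0) (h₁ : m + (k + 1) ≠ 0) :
    ((m, k), l) ∈ ⋃ i, Set.range (sectorEmb i) := by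
  rw [Set.mem_iUnion]
  rcases h₀.lt_or_gt with h₀ | h₀
  · rcases h₁.lt_or_gt with h₁ | h₁
    · refine ⟨2, ((k, (-m - k - 2).toNat), l + m), ?_⟩
      grind [sectorEmb]
    · refine ⟨1, (((-m - 1).toNat, (k + m).toNat), l + m), ?_⟩
      grind [sectorEmb]
  · refine ⟨0, (((m - 1).toNat, k), l), ?_⟩
    grind [sectorEmb]

/-- The summand `1 / (m ^ q * n ^ s * (m + n) ^ b * l ^ p * (l + m) ^ a * (l + m + n) ^ c)` as a
function of `((m, n - 1), l)`, where `m` and `l` run over all integers. -/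
noncomputable def latticeTerm (p q a b c : ℕ) (s : ℂ) (x : (ℤ × ℕ) × ℤ) : ℂ :=
  tornheimTerm q s b x.1 *
    ((x.2 : ℂ) ^ p * (x.2 + x.1.1) ^ a * (x.2 + x.1.1 + (x.1.2 + 1 : ℕ)) ^ c)⁻¹

lemma latticeTerm_sectorEmb_zero (p q a b c : ℕ) (s : ℂ) (x : (ℕ × ℕ) × ℤ) :
    latticeTerm p q a b c s (sectorEmb 0 x) = insertionTerm p a c q s b x := by
  obtain ⟨⟨i, j⟩, l⟩ := x
  have h : ((i + 1 : ℕ) : ℂ) + (j + 1 : ℕ) = (i + 1 + (j + 1) : ℕ) := by push_cast; ring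
  simp only [latticeTerm, sectorEmb, tornheimTerm, insertionTerm, Int.cast_natCast, h, cpow_natCast,
    mul_inv]
  ring

lemma latticeTerm_sectorEmb_one (p q a b c : ℕ) (s : ℂ) (x : (ℕ × ℕ) × ℤ) :
    latticeTerm p q a b c s (sectorEmb 1 x) = (-1) ^ q * insertionTerm a p c q b s x := by
  obtain ⟨⟨i, j⟩, l⟩ := x
  have h₀ : (-((i + 1 : ℕ) : ℂ)) + (i + 1 + j + 1 : ℕ) = (j + 1 : ℕ) := by push_cast; ring
  have h₁ : ((l + (i + 1 : ℕ) : ℤ) : ℂ) = l + (i + 1 : ℕ) := by push_cast; ring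
  have h₂ : (l : ℂ) + (i + 1 : ℕ) + -((i + 1 : ℕ) : ℂ) = l := by ring
  have h₃ : (l : ℂ) + (i + 1 + j + 1 : ℕ) = l + (i + 1 : ℕ) + (j + 1 : ℕ) := by push_cast; ring
  simp only [latticeTerm, sectorEmb, tornheimTerm, insertionTerm, Int.cast_neg, Int.cast_natCast,
    h₀, h₁, h₂, h₃, cpow_natCast, mul_inv, inv_neg_pow]
  simp only [add_assoc]
  ring

lemma latticeTerm_sectorEmb_two (p q a b c : ℕ) (s : ℂ) (x : (ℕ × ℕ) × ℤ) :
    latticeTerm p q a b c s (sectorEmb 2 x) = (-1) ^ (q + b) * insertionTerm a c p s b q x := by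
  obtain ⟨⟨i, j⟩, l⟩ := x
  have h₀ : -((i + 1 + (j + 1) : ℕ) : ℂ) + (i + 1 : ℕ) = -((j + 1 : ℕ) : ℂ) := by push_cast; ring
  have h₁ : ((l + (i + 1 + (j + 1) : ℕ) : ℤ) : ℂ) = l + (i + 1 : ℕ) + (j + 1 : ℕ) := by
    push_cast; ring
  have h₂ : (l : ℂ) + (i + 1 : ℕ) + (j + 1 : ℕ) + -((i + 1 + (j + 1) : ℕ) : ℂ) = l := by
    push_cast; ring
  simp only [latticeTerm, sectorEmb, tornheimTerm, insertionTerm, Int.cast_neg, Int.cast_natCast,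
    h₀, h₁, h₂, cpow_natCast, mul_inv, inv_neg_pow]
  ring

lemma support_latticeTerm_subset {q b : ℕ} (hq : 0 < q) (hb : 0 < b) (p a c : ℕ) (s : ℂ) :
    Function.support (latticeTerm p q a b c s) ⊆ ⋃ i, Set.range (sectorEmb i) := by
  rintro ⟨⟨m, k⟩, l⟩ hx
  have ne_zero : ¬ (m = 0 ∨ m + (k + 1 : ℕ) = 0) := fun h ↦
    hx (by rw [latticeTerm, tornheimTerm_eq_zero hq hb s h, zero_mul])
  exact mem_iUnion_range_sectorEmb (by tauto) (by push_cast at ne_zero; tauto)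

lemma hasSum_latticeTerm {p q a b c : ℕ} (hp : 0 < p) (hq : 0 < q) (ha : 0 < a) (hb : 0 < b)
    (hc : 0 < c) {s : ℂ} (hs : 1 ≤ s.re) :
    HasSum (latticeTerm p q a b c s) (Scomb ZA3 p q a b c s) := by
  have one_le_q := one_le_re_natCast hq
  have one_le_b := one_le_re_natCast hb
  have := hasSum_of_support_subset_iUnion_range injective_sectorEmb
    (support_latticeTerm_subset hq hb p a c s) (a := ![_, _, _]) fun i ↦ by
    fin_cases i
    · exact (hasSum_insertionTerm hp ha hc one_le_q hs one_le_b).congr_fun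
        (latticeTerm_sectorEmb_zero p q a b c s)
    · exact ((hasSum_insertionTerm ha hp hc one_le_q one_le_b hs).mul_left _).congr_fun
        (latticeTerm_sectorEmb_one p q a b c s)
    · exact ((hasSum_insertionTerm ha hc hp hs one_le_b one_le_q).mul_left _).congr_fun
        (latticeTerm_sectorEmb_two p q a b c s)
  convert this using 1
  simp only [Fin.sum_univ_three, Matrix.cons_val, Scomb]
  ring

end Chambers

section Fibres

open SummationFilter

lemma hasSum_latticeTerm_fibre {p q a b c : ℕ} (hp : 0 < p) (hq : 0 < q) (ha : 0 < a) (hb : 0 < b)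
    (hc : 0 < c) {s : ℂ} (hsum : Summable (latticeTerm p q a b c s)) (v : ℤ × ℕ) :
    HasSum (fun l ↦ latticeTerm p q a b c s (v, l))
      (tornheimTerm q s b v * fibreSum p a c v.1 (v.2 + 1 : ℕ)) := by
  by_cases hv : v.1 = 0 ∨ v.1 + (v.2 + 1 : ℕ) = 0
  · have h := tornheimTerm_eq_zero hq hb s hv
    simpa only [latticeTerm, h, zero_mul] using hasSum_zero
  rw [not_or] at hv
  have unconditional := (hsum.prod_factor v).hasSum
  have symmetric : HasSum (fun l ↦ latticeTerm p q a b c s (v, l))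
      (tornheimTerm q s b v * fibreSum p a c v.1 (v.2 + 1 : ℕ)) (symmetricIcc ℤ) := by
    have := hasSum_symmetricIcc_fibreSum hv.1 (n := (v.2 + 1 : ℕ)) (by omega) hv.2 hp ha hc
    simpa only [latticeTerm, Int.cast_natCast] using this.mul_left (tornheimTerm q s b v)
  have := HasSum.unique (unconditional.mono_left le_atTop) symmetric
  rwa [this] at unconditional

end Fibres

end RootSystemA3

/-- Functional relation for the zeta-function of the root system `A₃`
(Theorem 5.2 of Komori–Matsumoto–Tsumura). -/
theorem functional_relation_A3 (p q a b c : ℕ) (hp : 0 < p) (hq : 0 < q) (ha : 0 < a)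
    (hb : 0 < b) (hc : 0 < c) (s : ℂ) (hs : 1 < s.re) :
    Scomb ZA3 p q a b c s = J0 p q a b c s := by
  have sum_over_chambers := RootSystemA3.hasSum_latticeTerm hp hq ha hb hc hs.le
  have sum_over_fibres := sum_over_chambers.prod_fiberwise
    (RootSystemA3.hasSum_latticeTerm_fibre hp hq ha hb hc sum_over_chambers.summable)
  exact sum_over_fibres.unique (RootSystemA3.hasSum_tornheimTerm_mul_fibreSum hp hq hb hc hs)
end
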